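/- Let K be the distribution function of a probability measure on [0,1], let (X_i)_{i∈ℕ} be identically distributed real random variables with common distribution function F ∈ 𝓕_K satisfying F(x) ∈ (0,1) for all x ∈ ℝ, let 0 ≤ β′ < γ ≤ 1, and assume conditions (a) and (b): (a) for each x ∈ (0,1) there exist L(x) > 0 and δ(x) > 0 with |K(y) − K(x)| ≤ L(x)·|y − x| for all y ∈ (0,1) with |y − x| ≤ δ(x), where L(x) ≤ C′·x^{−β′}(1−x)^{−β′} for a constant C′ > 0; (b) ∫_{−∞}^0 F(x)^{γ−β′} dx + ∫_0^{∞} (1−F(x))^{γ−β′} dx < ∞. Suppose (X_i) is α-mixing with coefficients (α(n))_{n≥1}, extended by α(t) := α(⌊t⌋) for t ≥ 1 and α(t) := 1/4 for t ∈ [0,1), that ∫_{−∞}^{∞} φ_{γ,F} dF < ∞, and that ∫_0^1 log(1 + α^→(s/2))·Ḡ^→(s) ds < ∞, where G is the distribution function of φ_{γ,F}(X_1) and Ḡ := 1 − G. Then |𝓛_K(F̂_n) − 𝓛_K(F)| → 0 ℙ-almost surely as n → ∞. -/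

import Mathlib

open MeasureTheory Filter Set

/-- The empirical distribution function of `X 0, …, X (n-1)` evaluated at `x`. -/
noncomputable def empDF {Ω : Type*} (X : ℕ → Ω → ℝ) (n : ℕ) (ω : Ω) (x : ℝ) : ℝ :=
  (((Finset.range n).filter fun i => X i ω ≤ x).card : ℝ) / n

/-- Distribution function of a random variable. -/
noncomputable def distFun {Ω : Type*} [MeasurableSpace Ω] (P : Measure Ω) (Y : Ω → ℝ) (x : ℝ) : ℝ :=
  (P {ω | Y ω ≤ x}).toReal

/-- α-mixing coefficients of a sequence of real random variables. -/
noncomputable def alphaCoef {Ω : Type*} [MeasurableSpace Ω] (P : Measure Ω)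
    (X : ℕ → Ω → ℝ) (n : ℕ) : ℝ :=
  sSup { c : ℝ | ∃ (k : ℕ) (A B : Set Ω),
    MeasurableSet[⨆ i ∈ {i : ℕ | i ≤ k}, MeasurableSpace.comap (X i) Real.measurableSpace] A ∧
    MeasurableSet[⨆ i ∈ {i : ℕ | k + n ≤ i}, MeasurableSpace.comap (X i) Real.measurableSpace] B ∧
    c = |(P (A ∩ B)).toReal - (P A).toReal * (P B).toReal| }

/-- Càdlàg extension of mixing coefficients, equal to `1/4` on `[0,1)`
and to `α ⌊t⌋` for `t ≥ 1`. -/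
noncomputable def alphaExt (α : ℕ → ℝ) (t : ℝ) : ℝ :=
  if t < 1 then 1 / 4 else α ⌊t⌋₊

/-- Right-continuous inverse of a nonincreasing function on `[0,∞)`, with `sup ∅ = 0`. -/
noncomputable def rcInv (h : ℝ → ℝ) (y : ℝ) : ℝ :=
  sSup { x : ℝ | 0 ≤ x ∧ y < h x }

/-- `K` is the distribution function of a probability measure on `[0,1]`. -/
def IsDFon01 (K : ℝ → ℝ) : Prop :=
  ∃ μ : Measure ℝ, IsProbabilityMeasure μ ∧ μ (Set.Icc (0 : ℝ) 1)ᶜ = 0 ∧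
    ∀ x, K x = (μ (Set.Iic x)).toReal

/-- The L-functional `𝓛_K(F) = ∫ x dK(F(x))`, written in the form
`∫_0^∞ (1 - K(F(x))) dx - ∫_{-∞}^0 K(F(x)) dx`, valid for `F ∈ 𝓕_K`. -/
noncomputable def LFunc (K F : ℝ → ℝ) : ℝ :=
  (∫ x in Set.Ioi (0 : ℝ), (1 - K (F x))) - ∫ x in Set.Iic (0 : ℝ), K (F x)

/-- `F ∈ 𝓕_K`, i.e. `∫ |x| dK(F(x)) < ∞`, expressed via the tail representation. -/
def MemFK (K F : ℝ → ℝ) : Prop :=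
  IntegrableOn (fun x => K (F x)) (Set.Iic (0 : ℝ)) ∧
    IntegrableOn (fun x => 1 - K (F x)) (Set.Ioi (0 : ℝ))

/-- The weight function `φ_{γ,F}(x) = F(x)^{-γ}` for `x < 0` and `(1-F(x))^{-γ}` for `x ≥ 0`. -/
noncomputable def phiW (γ : ℝ) (F : ℝ → ℝ) (x : ℝ) : ℝ :=
  if x < 0 then F x ^ (-γ) else (1 - F x) ^ (-γ)

/-!
Rio's covariance inequality bounds the covariance of two variables, measurable with respect to
σ-algebras with mixing coefficient `a`, by the integral over `(0, a)` of the squared quantile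
function of a common envelope. Let `0 ≤ f ≤ φ`, where `φ(X i)` has upper quantile function `Q`, and
apply this inequality to the Huber function of the centred sum of `n` variables `f(X i)` truncated
at a level `M ≈ n / q`, where covariances at lags beyond `q` are negligible. Every error is then at
most a constant times the integral of `lagWeight n (1 + α^→(u)) (Q u)`; along `n = ⌊c ^ j⌋` these
integrals sum to at most a constant times `∫ Q (1 + log (1 + α^→))`, and monotone interpolation
yields the strong law for `f`.

For `f = φ_{γ,F}` the strong law gives `F̂_n ≤ B F ^ γ` on the negative half-line and
`1 - F̂_n ≤ B (1 - F) ^ γ` on the positive one, with a random constant `B`; for indicators it gives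
`F̂_n → F`. Condition (a) implies `K(y) ≤ D y ^ (1 - β')`, and symmetrically at `1`, so by (b) the
integrands of `𝓛_K(F̂_n)` are dominated by a multiple of `F ^ (γ - β')` resp.
`(1 - F) ^ (γ - β')`, and dominated convergence applies.
-/

section StrongMixing

open ProbabilityTheory
open scoped ENNReal

variable {Ω : Type*} {m₁ m₂ mΩ : MeasurableSpace Ω} {P : Measure Ω} {U V : Ω → ℝ}
  {a b c : ℝ}

/-- The strong mixing coefficient of the σ-algebras `m₁` and `m₂` under `P` is at most `a`. -/
def StrongMixingBound (P : Measure Ω) (m₁ m₂ : MeasurableSpace Ω) (a : ℝ) : Prop :=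
  ∀ A B, MeasurableSet[m₁] A → MeasurableSet[m₂] B → |P.real (A ∩ B) - P.real A * P.real B| ≤ a

theorem memLp_of_forall_mem_Icc [IsFiniteMeasure P] (hU : Measurable U)
    (hUab : ∀ ω, U ω ∈ Icc a b) (p : ℝ≥0∞) : MemLp U p P :=
  memLp_of_bounded (.of_forall hUab) hU.aestronglyMeasurable p

theorem exists_integral_mul_le_setIntegral [IsFiniteMeasure P] (hm₁ : m₁ ≤ mΩ)
    (hU : Measurable[m₁] U) (hU01 : ∀ ω, U ω ∈ Icc (0 : ℝ) 1) (hV : Integrable V P) :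
    ∃ A, MeasurableSet[m₁] A ∧ ∫ ω, U ω * V ω ∂P ≤ ∫ ω in A, V ω ∂P := by
  have hA : MeasurableSet[m₁] {ω | 0 < (P[V|m₁]) ω} :=
    measurableSet_lt measurable_const stronglyMeasurable_condExp.measurable
  have integrable_mul {W : Ω → ℝ} (hW : Integrable W P) : Integrable (U * W) P :=
    hW.bdd_mul (c := 1) (hU.mono hm₁ le_rfl).aestronglyMeasurable
      (.of_forall fun ω => by rw [Real.norm_of_nonneg (hU01 ω).1]; exact (hU01 ω).2)
  refine ⟨_, hA, ?_⟩
  calc ∫ ω, U ω * V ω ∂P = ∫ ω, (P[U * V|m₁]) ω ∂P := (integral_condExp hm₁).symm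
    _ = ∫ ω, U ω * (P[V|m₁]) ω ∂P := integral_congr_ae <|
      condExp_mul_of_stronglyMeasurable_left hU.stronglyMeasurable (integrable_mul hV) hV
    _ ≤ ∫ ω, {ω | 0 < (P[V|m₁]) ω}.indicator (P[V|m₁]) ω ∂P := by
      refine integral_mono (integrable_mul integrable_condExp)
        (integrable_condExp.indicator (hm₁ _ hA)) fun ω => ?_
      obtain ⟨h0, h1⟩ := hU01 ω
      by_cases h : 0 < (P[V|m₁]) ω
      · rw [indicator_of_mem (by exact h)]
        exact mul_le_of_le_one_left h.le h1
      · rw [indicator_of_notMem (by exact h)]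
        exact mul_nonpos_of_nonneg_of_nonpos h0 (not_lt.mp h)
    _ = ∫ ω in {ω | 0 < (P[V|m₁]) ω}, V ω ∂P := by
      rw [integral_indicator (hm₁ _ hA), setIntegral_condExp hm₁ hV hA]

theorem memLp_indicator_one [IsFiniteMeasure P] {A : Set Ω} (hA : MeasurableSet A) (p : ℝ≥0∞) :
    MemLp (A.indicator (1 : Ω → ℝ)) p P :=
  memLp_indicator_const p hA 1 (.inr (measure_ne_top P A))

theorem exists_covariance_le_covariance_indicator [IsProbabilityMeasure P] (hm₁ : m₁ ≤ mΩ)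
    (hU : Measurable[m₁] U) (hU01 : ∀ ω, U ω ∈ Icc (0 : ℝ) 1) (hV : MemLp V 2 P) :
    ∃ A, MeasurableSet[m₁] A ∧ cov[U, V; P] ≤ cov[A.indicator 1, V; P] := by
  have hVint : Integrable V P := hV.integrable one_le_two
  have hVc : MemLp (fun ω => V ω - P[V]) 2 P := hV.sub (memLp_const _)
  have hVc0 : P[fun ω => V ω - P[V]] = 0 := by simp [integral_sub hVint (integrable_const _)]
  have cov_eq {W : Ω → ℝ} (hW : MemLp W 2 P) :
      cov[W, V; P] = ∫ ω, W ω * (V ω - P[V]) ∂P := by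
    rw [← covariance_sub_const_right hVint P[V], covariance_eq_sub hW hVc, hVc0, mul_zero,
      sub_zero]
    rfl
  obtain ⟨A, hA, hUA⟩ :=
    exists_integral_mul_le_setIntegral hm₁ hU hU01 (hVc.integrable one_le_two)
  refine ⟨A, hA, ?_⟩
  rw [cov_eq (memLp_of_forall_mem_Icc (hU.mono hm₁ le_rfl) hU01 2),
    cov_eq (memLp_indicator_one (hm₁ _ hA) 2)]
  refine hUA.trans_eq ?_
  rw [← integral_indicator (hm₁ _ hA)]
  congr with ω
  by_cases h : ω ∈ A <;> simp [h]

theorem covariance_indicator_indicator [IsProbabilityMeasure P] {A B : Set Ω}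
    (hA : MeasurableSet A) (hB : MeasurableSet B) :
    cov[A.indicator 1, B.indicator 1; P] = P.real (A ∩ B) - P.real A * P.real B := by
  rw [covariance_eq_sub (memLp_indicator_one hA 2) (memLp_indicator_one hB 2),
    ← inter_indicator_one, integral_indicator_one (hA.inter hB), integral_indicator_one hA,
    integral_indicator_one hB]

namespace StrongMixingBound

theorem covariance_le [IsProbabilityMeasure P] (h : StrongMixingBound P m₁ m₂ a)
    (hm₁ : m₁ ≤ mΩ) (hm₂ : m₂ ≤ mΩ) (hU : Measurable[m₁] U) (hV : Measurable[m₂] V)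
    (hU01 : ∀ ω, U ω ∈ Icc (0 : ℝ) 1) (hV01 : ∀ ω, V ω ∈ Icc (0 : ℝ) 1) : cov[U, V; P] ≤ a := by
  obtain ⟨A, hA, hUA⟩ := exists_covariance_le_covariance_indicator hm₁ hU hU01
    (memLp_of_forall_mem_Icc (P := P) (hV.mono hm₂ le_rfl) hV01 2)
  obtain ⟨B, hB, hVB⟩ := exists_covariance_le_covariance_indicator hm₂ hV hV01
    (memLp_indicator_one (P := P) (hm₁ _ hA) 2)
  calc cov[U, V; P] ≤ cov[A.indicator 1, V; P] := hUA
    _ = cov[V, A.indicator 1; P] := covariance_comm _ _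
    _ ≤ cov[B.indicator 1, A.indicator 1; P] := hVB
    _ = P.real (A ∩ B) - P.real A * P.real B := by
      rw [covariance_comm, covariance_indicator_indicator (hm₁ _ hA) (hm₂ _ hB)]
    _ ≤ a := (le_abs_self _).trans (h A B hA hB)

theorem abs_covariance_le [IsProbabilityMeasure P] (h : StrongMixingBound P m₁ m₂ a)
    (hm₁ : m₁ ≤ mΩ) (hm₂ : m₂ ≤ mΩ) (hU : Measurable[m₁] U) (hV : Measurable[m₂] V)
    (hU01 : ∀ ω, U ω ∈ Icc (0 : ℝ) 1) (hV01 : ∀ ω, V ω ∈ Icc (0 : ℝ) 1) :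
    |cov[U, V; P]| ≤ a := by
  have hVint : Integrable V P :=
    (memLp_of_forall_mem_Icc (hV.mono hm₂ le_rfl) hV01 1).integrable le_rfl
  have hneg := h.covariance_le hm₁ hm₂ hU (hV.const_sub 1) hU01
    fun ω => ⟨sub_nonneg.mpr (hV01 ω).2, sub_le_self _ (hV01 ω).1⟩
  rw [covariance_const_sub_right hVint] at hneg
  exact abs_le.mpr ⟨neg_le.mp hneg, h.covariance_le hm₁ hm₂ hU hV hU01 hV01⟩

theorem abs_covariance_le_of_abs_le [IsProbabilityMeasure P] (h : StrongMixingBound P m₁ m₂ a)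
    (hm₁ : m₁ ≤ mΩ) (hm₂ : m₂ ≤ mΩ) (hU : Measurable[m₁] U) (hV : Measurable[m₂] V)
    (hb : 0 < b) (hc : 0 < c) (hUb : ∀ ω, |U ω| ≤ b) (hVc : ∀ ω, |V ω| ≤ c) :
    |cov[U, V; P]| ≤ 4 * b * c * a := by
  have rescaled_mem {d x : ℝ} (hd : 0 < d) (hx : |x| ≤ d) :
      1 / 2 + (2 * d)⁻¹ * x ∈ Icc (0 : ℝ) 1 := by
    have : |(2 * d)⁻¹ * x| ≤ 1 / 2 := by
      rw [abs_mul, abs_of_pos (by positivity), inv_mul_le_iff₀ (by positivity)]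
      linarith
    constructor <;> linarith [abs_le.mp this]
  have integrable {d : ℝ} {Z : Ω → ℝ} (hZ : Measurable Z) (hZd : ∀ ω, |Z ω| ≤ d) :
      Integrable Z P :=
    (memLp_of_forall_mem_Icc hZ (fun ω => abs_le.mp (hZd ω)) 1).integrable le_rfl
  have hUint := integrable (hU.mono hm₁ le_rfl) hUb
  have hVint := integrable (hV.mono hm₂ le_rfl) hVc
  have hscaled := h.abs_covariance_le hm₁ hm₂ ((hU.const_mul (2 * b)⁻¹).const_add (1 / 2))
    ((hV.const_mul (2 * c)⁻¹).const_add (1 / 2)) (fun ω => rescaled_mem hb (hUb ω))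
    (fun ω => rescaled_mem hc (hVc ω))
  rw [covariance_const_add_left (hUint.const_mul _), covariance_const_add_right (hVint.const_mul _),
    covariance_const_mul_left, covariance_const_mul_right, abs_mul, abs_mul,
    abs_of_pos (by positivity), abs_of_pos (by positivity), ← mul_assoc, ← mul_inv,
    inv_mul_le_iff₀ (by positivity)] at hscaled
  linarith

theorem indep [IsProbabilityMeasure P] (h : StrongMixingBound P m₁ m₂ 0) : Indep m₁ m₂ P := by
  rw [Indep_iff]
  intro A B hA hB
  have hAB := sub_eq_zero.mp (abs_nonpos_iff.mp (h A B hA hB))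
  rw [← ENNReal.toReal_eq_toReal_iff' (measure_ne_top _ _) (by finiteness), ENNReal.toReal_mul]
  exact hAB

end StrongMixingBound

end StrongMixing

section Clip

variable {c x : ℝ}

/-- Truncation of `x` to the interval `[-c, c]`. -/
noncomputable def clip (c x : ℝ) : ℝ := max (-c) (min x c)

@[fun_prop]
theorem measurable_clip (c : ℝ) : Measurable (clip c) := by
  unfold clip
  fun_prop

theorem abs_clip_le (hc : 0 ≤ c) (x : ℝ) : |clip c x| ≤ c :=
  abs_le.mpr ⟨le_max_left _ _, max_le (by linarith) (min_le_right _ _)⟩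

theorem clip_of_abs_le (hx : |x| ≤ c) : clip c x = x := by
  rw [clip, min_eq_left (le_of_abs_le hx), max_eq_right (neg_le_of_abs_le hx)]

theorem abs_sub_clip_of_lt_abs (hc : 0 ≤ c) (hx : c < |x|) : |x - clip c x| = |x| - c := by
  rcases lt_abs.mp hx with h | h
  · rw [clip, min_eq_right h.le, max_eq_right (by linarith), abs_of_pos (sub_pos.mpr h),
      abs_of_pos (hc.trans_lt h)]
  · rw [clip, min_eq_left (by linarith), max_eq_left (by linarith),
      abs_of_neg (by linarith : x < 0), abs_of_neg (by linarith)]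
    ring

theorem mul_abs_sub_clip_le (hc : 0 ≤ c) (x : ℝ) :
    c * |x - clip c x| ≤ {y | c < |y|}.indicator (· ^ 2) x := by
  by_cases hx : c < |x|
  · rw [indicator_of_mem (by exact hx), abs_sub_clip_of_lt_abs hc hx]
    nlinarith [sq_abs x]
  · rw [indicator_of_notMem (by exact hx), clip_of_abs_le (not_lt.mp hx), sub_self, abs_zero,
      mul_zero]

theorem sq_sub_clip_le (hc : 0 ≤ c) (x : ℝ) :
    (x - clip c x) ^ 2 ≤ {y | c < |y|}.indicator (· ^ 2) x := by
  by_cases hx : c < |x|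
  · rw [indicator_of_mem (by exact hx), ← sq_abs, abs_sub_clip_of_lt_abs hc hx]
    nlinarith [sq_abs x]
  · rw [indicator_of_notMem (by exact hx), clip_of_abs_le (not_lt.mp hx), sub_self,
      zero_pow two_ne_zero]

end Clip

section TruncatedCovariance

open ProbabilityTheory

variable {Ω : Type*} {m₁ m₂ mΩ : MeasurableSpace Ω} {P : Measure Ω} {U V : Ω → ℝ} {a c : ℝ}

theorem abs_covariance_le_integral_abs [IsProbabilityMeasure P] (hU : MemLp U 2 P)
    (hV : MemLp V 2 P) (hVc : ∀ ω, |V ω| ≤ c) : |cov[U, V; P]| ≤ 2 * (c * ∫ ω, |U ω| ∂P) := by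
  have hUint : Integrable U P := hU.integrable one_le_two
  have hmul : |∫ ω, (U * V) ω ∂P| ≤ c * ∫ ω, |U ω| ∂P := by
    rw [← integral_const_mul]
    refine abs_integral_le_integral_abs.trans
      (integral_mono (hU.integrable_mul hV).abs (hUint.abs.const_mul c) fun ω => ?_)
    simp only [Pi.mul_apply, abs_mul]
    exact (mul_le_mul_of_nonneg_left (hVc ω) (abs_nonneg _)).trans_eq (mul_comm _ _)
  have hmean : |P[U] * P[V]| ≤ c * ∫ ω, |U ω| ∂P := by
    rw [abs_mul, mul_comm]
    have hV : |P[V]| ≤ c := by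
      simpa using norm_integral_le_of_norm_le_const (μ := P) (f := V) (.of_forall hVc)
    exact mul_le_mul hV abs_integral_le_integral_abs (abs_nonneg _) ((abs_nonneg _).trans hV)
  rw [covariance_eq_sub hU hV, two_mul]
  exact (abs_sub _ _).trans (add_le_add hmul hmean)

theorem abs_covariance_le_integral_sq [IsProbabilityMeasure P] (hU : MemLp U 2 P)
    (hV : MemLp V 2 P) : |cov[U, V; P]| ≤ ((∫ ω, U ω ^ 2 ∂P) + ∫ ω, V ω ^ 2 ∂P) / 2 := by
  have hvar : |2 * cov[U, V; P]| ≤ Var[U; P] + Var[V; P] := by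
    have hadd := (variance_nonneg (U + V) P).trans_eq (variance_add hU hV)
    have hsub := (variance_nonneg (U - V) P).trans_eq (variance_sub hU hV)
    exact abs_le.mpr ⟨by linarith, by linarith⟩
  rw [abs_mul, abs_two] at hvar
  have hUsq := variance_le_expectation_sq hU.aestronglyMeasurable
  have hVsq := variance_le_expectation_sq hV.aestronglyMeasurable
  simp only [Pi.pow_apply] at hUsq hVsq
  linarith

theorem measurableSet_lt_abs (hU : Measurable U) (c : ℝ) : MeasurableSet {ω | c < |U ω|} :=
  measurableSet_lt measurable_const hU.abs

theorem memLp_clip [IsFiniteMeasure P] (hc : 0 ≤ c) (hU : Measurable U) :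
    MemLp (fun ω => clip c (U ω)) 2 P :=
  memLp_of_forall_mem_Icc (by fun_prop) (fun ω => abs_le.mp (abs_clip_le hc (U ω))) 2

theorem mul_integral_abs_sub_clip_le [IsFiniteMeasure P] (hc : 0 ≤ c) (hU : Measurable U)
    (hU2 : MemLp U 2 P) :
    c * ∫ ω, |U ω - clip c (U ω)| ∂P ≤ ∫ ω in {ω | c < |U ω|}, U ω ^ 2 ∂P := by
  rw [← integral_indicator (measurableSet_lt_abs hU c), ← integral_const_mul]
  exact integral_mono (((hU2.sub (memLp_clip hc hU)).integrable one_le_two).abs.const_mul c)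
    (hU2.integrable_sq.indicator (measurableSet_lt_abs hU c)) fun ω => mul_abs_sub_clip_le hc (U ω)

theorem integral_sq_sub_clip_le [IsFiniteMeasure P] (hc : 0 ≤ c) (hU : Measurable U)
    (hU2 : MemLp U 2 P) :
    ∫ ω, (U ω - clip c (U ω)) ^ 2 ∂P ≤ ∫ ω in {ω | c < |U ω|}, U ω ^ 2 ∂P := by
  rw [← integral_indicator (measurableSet_lt_abs hU c)]
  exact integral_mono (hU2.sub (memLp_clip hc hU)).integrable_sq
    (hU2.integrable_sq.indicator (measurableSet_lt_abs hU c)) fun ω => sq_sub_clip_le hc (U ω)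

namespace StrongMixingBound

theorem abs_covariance_le_add_tail [IsProbabilityMeasure P] (h : StrongMixingBound P m₁ m₂ a)
    (hm₁ : m₁ ≤ mΩ) (hm₂ : m₂ ≤ mΩ) (hU : Measurable[m₁] U) (hV : Measurable[m₂] V)
    (hU2 : MemLp U 2 P) (hV2 : MemLp V 2 P) (hc : 0 < c) :
    |cov[U, V; P]| ≤ 4 * c ^ 2 * a + 5 / 2 *
      ((∫ ω in {ω | c < |U ω|}, U ω ^ 2 ∂P) + ∫ ω in {ω | c < |V ω|}, V ω ^ 2 ∂P) := by
  have hU' := hU.mono hm₁ le_rfl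
  have hV' := hV.mono hm₂ le_rfl
  have hUc : MemLp (fun ω => clip c (U ω)) 2 P := memLp_clip hc.le hU'
  have hVc : MemLp (fun ω => clip c (V ω)) 2 P := memLp_clip hc.le hV'
  have hUr : MemLp (fun ω => U ω - clip c (U ω)) 2 P := hU2.sub hUc
  have hVr : MemLp (fun ω => V ω - clip c (V ω)) 2 P := hV2.sub hVc
  have hsplit : cov[U, V; P] =
      cov[fun ω => clip c (U ω), fun ω => clip c (V ω); P]
      + cov[fun ω => U ω - clip c (U ω), fun ω => clip c (V ω); P]
      + cov[fun ω => V ω - clip c (V ω), fun ω => clip c (U ω); P]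
      + cov[fun ω => U ω - clip c (U ω), fun ω => V ω - clip c (V ω); P] := by
    rw [covariance_comm (fun ω => V ω - clip c (V ω)), covariance_fun_sub_left hU2 hUc hVc,
      covariance_fun_sub_left hU2 hUc hVr, covariance_fun_sub_right hU2 hV2 hVc,
      covariance_fun_sub_right hUc hV2 hVc]
    ring
  have hclip := h.abs_covariance_le_of_abs_le hm₁ hm₂ ((measurable_clip c).comp hU)
    ((measurable_clip c).comp hV) hc hc (fun ω => abs_clip_le hc.le (U ω))
    (fun ω => abs_clip_le hc.le (V ω))
  have hcross₁ := abs_covariance_le_integral_abs hUr hVc fun ω => abs_clip_le hc.le (V ω)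
  have hcross₂ := abs_covariance_le_integral_abs hVr hUc fun ω => abs_clip_le hc.le (U ω)
  have htail := abs_covariance_le_integral_sq hUr hVr
  have hU₁ := mul_integral_abs_sub_clip_le hc.le hU' hU2
  have hV₁ := mul_integral_abs_sub_clip_le hc.le hV' hV2
  have hU₂ := integral_sq_sub_clip_le hc.le hU' hU2
  have hV₂ := integral_sq_sub_clip_le hc.le hV' hV2
  rw [hsplit]
  refine (abs_add_le _ _).trans ((add_le_add_left (abs_add_three _ _ _) _).trans ?_)
  simp only [Function.comp_def] at hclip
  linarith

end StrongMixingBound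

end TruncatedCovariance

section QuantileCovariance

open ProbabilityTheory

variable {Ω : Type*} {m₁ m₂ mΩ : MeasurableSpace Ω} {P : Measure Ω} {U V W W₁ W₂ : Ω → ℝ}
  {Q : ℝ → ℝ} {a c : ℝ}

/-- The uniform distribution on `(0, 1)`, the domain of quantile functions. -/
noncomputable abbrev uniform01 : Measure ℝ := volume.restrict (Ioo 0 1)

instance isProbabilityMeasure_uniform01 : IsProbabilityMeasure uniform01 :=
  ⟨by simp⟩

theorem setIntegral_sq_le_of_identDistrib (hU : Measurable U) (hUW : ∀ ω, |U ω| ≤ W ω)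
    (hQW : IdentDistrib Q W uniform01 P) (hQ2 : MemLp Q 2 uniform01) :
    ∫ ω in {ω | c < |U ω|}, U ω ^ 2 ∂P ≤
      ∫ u, {u | c < Q u}.indicator (fun u => Q u ^ 2) u ∂uniform01 := by
  have hg : Measurable ((Ioi c).indicator (fun y : ℝ => y ^ 2)) :=
    (measurable_id.pow_const 2).indicator measurableSet_Ioi
  have hgQW := hQW.comp hg
  have hgQ : Integrable ((Ioi c).indicator (fun y => y ^ 2) ∘ Q) uniform01 := by
    refine hQ2.integrable_sq.mono (hg.comp_aemeasurable hQW.aemeasurable_fst).aestronglyMeasurable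
      (.of_forall fun u => ?_)
    exact norm_indicator_le_norm_self (fun y : ℝ => y ^ 2) (Q u)
  calc ∫ ω in {ω | c < |U ω|}, U ω ^ 2 ∂P
      = ∫ ω, {ω | c < |U ω|}.indicator (fun ω => U ω ^ 2) ω ∂P :=
        (integral_indicator (measurableSet_lt_abs hU c)).symm
    _ ≤ ∫ ω, (Ioi c).indicator (fun y => y ^ 2) (W ω) ∂P := by
        refine integral_mono_of_nonneg
          (.of_forall fun ω => indicator_nonneg (fun _ _ => sq_nonneg _) ω)
          (hgQW.integrable_iff.mp hgQ) (.of_forall fun ω => ?_)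
        refine indicator_le' (fun ω hω => ?_)
          (fun ω _ => indicator_nonneg (fun y _ => sq_nonneg y) (W ω)) ω
        rw [indicator_of_mem (by exact lt_of_lt_of_le hω (hUW ω)), ← sq_abs]
        exact pow_le_pow_left₀ (abs_nonneg _) (hUW ω) 2
    _ = ∫ u, {u | c < Q u}.indicator (fun u => Q u ^ 2) u ∂uniform01 := hgQW.integral_eq.symm

theorem integral_indicator_sq_le_of_antitoneOn (hQ : AntitoneOn Q (Ioo 0 1))
    (hQ2 : MemLp Q 2 uniform01) (ha : a ∈ Ioo (0 : ℝ) 1) :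
    ∫ u, {u | Q a < Q u}.indicator (fun u => Q u ^ 2) u ∂uniform01 ≤ ∫ u in Ioo 0 a, Q u ^ 2 := by
  have hsub : Ioo 0 a ⊆ Ioo (0 : ℝ) 1 := Ioo_subset_Ioo_right ha.2.le
  have hrestrict : ∫ u in Ioo 0 a, Q u ^ 2 =
      ∫ u, (Ioo 0 a).indicator (fun u => Q u ^ 2) u ∂uniform01 := by
    rw [integral_indicator measurableSet_Ioo, Measure.restrict_restrict measurableSet_Ioo,
      inter_eq_left.mpr hsub]
  rw [hrestrict]
  refine integral_mono_of_nonneg (.of_forall fun u => indicator_nonneg (fun _ _ => sq_nonneg _) u)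
    (hQ2.integrable_sq.indicator measurableSet_Ioo) ?_
  filter_upwards [ae_restrict_mem measurableSet_Ioo] with u hu
  by_cases hQu : Q a < Q u
  · have hua : u < a := lt_of_not_ge fun h => hQu.not_ge (hQ ha hu h)
    rw [indicator_of_mem (by exact hQu), indicator_of_mem (by exact ⟨hu.1, hua⟩)]
  · rw [indicator_of_notMem (by exact hQu)]
    exact indicator_nonneg (fun _ _ => sq_nonneg _) u

theorem mul_sq_le_setIntegral_sq_of_antitoneOn (hQ : AntitoneOn Q (Ioo 0 1))
    (hQ2 : MemLp Q 2 uniform01) (hQ0 : 0 ≤ Q a) (ha : a ∈ Ioo (0 : ℝ) 1) :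
    a * Q a ^ 2 ≤ ∫ u in Ioo 0 a, Q u ^ 2 := by
  calc a * Q a ^ 2 = ∫ _ in Ioo 0 a, Q a ^ 2 := by simp [ha.1.le]
    _ ≤ ∫ u in Ioo 0 a, Q u ^ 2 := by
      refine setIntegral_mono_on (integrable_const _)
        (IntegrableOn.mono_set hQ2.integrable_sq (Ioo_subset_Ioo_right ha.2.le))
        measurableSet_Ioo fun u hu => ?_
      exact pow_le_pow_left₀ hQ0 (hQ ⟨hu.1, hu.2.trans ha.2⟩ ha hu.2.le) 2

/-- A form of Rio's covariance inequality. -/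
theorem StrongMixingBound.abs_covariance_le_setIntegral_sq [IsProbabilityMeasure P]
    (h : StrongMixingBound P m₁ m₂ a) (hm₁ : m₁ ≤ mΩ) (hm₂ : m₂ ≤ mΩ) (hU : Measurable[m₁] U)
    (hV : Measurable[m₂] V) (hUW : ∀ ω, |U ω| ≤ W₁ ω) (hVW : ∀ ω, |V ω| ≤ W₂ ω)
    (hQ : AntitoneOn Q (Ioo 0 1)) (hQ0 : ∀ u ∈ Ioo (0 : ℝ) 1, 0 < Q u)
    (hQ2 : MemLp Q 2 uniform01) (hQW₁ : IdentDistrib Q W₁ uniform01 P)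
    (hQW₂ : IdentDistrib Q W₂ uniform01 P) (ha0 : 0 ≤ a) (ha1 : a < 1) :
    |cov[U, V; P]| ≤ 9 * ∫ u in Ioo 0 a, Q u ^ 2 := by
  have memLp {Z W : Ω → ℝ} (hZ : Measurable Z) (hZW : ∀ ω, |Z ω| ≤ W ω)
      (hQW : IdentDistrib Q W uniform01 P) : MemLp Z 2 P :=
    (hQW.memLp_snd hQ2).mono' hZ.aestronglyMeasurable (.of_forall hZW)
  have hU2 := memLp (hU.mono hm₁ le_rfl) hUW hQW₁
  have hV2 := memLp (hV.mono hm₂ le_rfl) hVW hQW₂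
  rcases ha0.eq_or_lt with rfl | ha0
  · have hindep : IndepFun U V P := (IndepFun_iff_Indep _ _ _).mpr <|
      indep_of_indep_of_le_left (indep_of_indep_of_le_right h.indep hV.comap_le) hU.comap_le
    simp [hindep.covariance_eq_zero hU2 hV2]
  have ha : a ∈ Ioo (0 : ℝ) 1 := ⟨ha0, ha1⟩
  have tail {Z W : Ω → ℝ} (hZ : Measurable Z) (hZW : ∀ ω, |Z ω| ≤ W ω)
      (hQW : IdentDistrib Q W uniform01 P) :
      ∫ ω in {ω | Q a < |Z ω|}, Z ω ^ 2 ∂P ≤ ∫ u in Ioo 0 a, Q u ^ 2 :=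
    (setIntegral_sq_le_of_identDistrib hZ hZW hQW hQ2).trans
      (integral_indicator_sq_le_of_antitoneOn hQ hQ2 ha)
  have htrunc := h.abs_covariance_le_add_tail hm₁ hm₂ hU hV hU2 hV2 (hQ0 a ha)
  have hclip := mul_sq_le_setIntegral_sq_of_antitoneOn hQ hQ2 (hQ0 a ha).le ha
  linarith [tail (hU.mono hm₁ le_rfl) hUW hQW₁, tail (hV.mono hm₂ le_rfl) hVW hQW₂]

end QuantileCovariance

section MixingCoefficient

variable {Ω : Type*} {mΩ : MeasurableSpace Ω} {P : Measure Ω} {X : ℕ → Ω → ℝ} {s : Set ℕ}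

/-- The σ-algebra generated by the random variables `X i`, `i ∈ s`. -/
abbrev coordSigma (X : ℕ → Ω → ℝ) (s : Set ℕ) : MeasurableSpace Ω :=
  ⨆ i ∈ s, MeasurableSpace.comap (X i) Real.measurableSpace

theorem coordSigma_le (hX : ∀ i, Measurable (X i)) (s : Set ℕ) : coordSigma X s ≤ mΩ :=
  iSup₂_le fun i _ => (hX i).comap_le

theorem measurable_coordSigma {i : ℕ} (hi : i ∈ s) : Measurable[coordSigma X s] (X i) :=
  measurable_iff_comap_le.mpr
    (le_iSup₂ (f := fun i (_ : i ∈ s) => MeasurableSpace.comap (X i) Real.measurableSpace) i hi)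

theorem coordSigma_comp_le {g : ℝ → ℝ} (hg : Measurable g) (s : Set ℕ) :
    coordSigma (fun i ω => g (X i ω)) s ≤ coordSigma X s :=
  iSup₂_le fun _ hi => (hg.comp (measurable_coordSigma hi)).comap_le

theorem StrongMixingBound.mono {m₁ m₂ n₁ n₂ : MeasurableSpace Ω} {a : ℝ}
    (h : StrongMixingBound P m₁ m₂ a) (h₁ : n₁ ≤ m₁) (h₂ : n₂ ≤ m₂) :
    StrongMixingBound P n₁ n₂ a :=
  fun A B hA hB => h A B (h₁ A hA) (h₂ B hB)

theorem abs_measureReal_inter_sub_mul_le [IsProbabilityMeasure P] (A : Set Ω) {B : Set Ω}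
    (hB : MeasurableSet B) : |P.real (A ∩ B) - P.real A * P.real B| ≤ 1 / 4 := by
  have h0 : 0 ≤ P.real (A ∩ B) := measureReal_nonneg
  have hA : P.real (A ∩ B) ≤ P.real A := measureReal_mono inter_subset_left
  have hB' : P.real (A ∩ B) ≤ P.real B := measureReal_mono inter_subset_right
  have hunion : P.real A + P.real B - 1 ≤ P.real (A ∩ B) := by
    linarith [measureReal_union_add_inter (μ := P) (s := A) hB,
      measureReal_le_one (μ := P) (s := A ∪ B)]
  have hA0 : 0 ≤ P.real A := h0.trans hA
  have hB0 : 0 ≤ P.real B := h0.trans hB'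
  have hA1 : P.real A ≤ 1 := measureReal_le_one
  have hB1 : P.real B ≤ 1 := measureReal_le_one
  rw [abs_le]
  constructor
  · rcases le_total (P.real A + P.real B) 1 with hle | hge
    · have hsum := mul_nonneg (sub_nonneg.mpr hle) (add_nonneg hA0 hB0)
      nlinarith [sq_nonneg (P.real A - P.real B)]
    · have hsum := mul_nonneg (sub_nonneg.mpr hge) (sub_nonneg.mpr (add_le_add hA1 hB1))
      nlinarith [sq_nonneg (P.real A - P.real B)]
  · nlinarith [sq_nonneg (P.real (A ∩ B) - 1 / 2), mul_le_mul hA hB' h0 hA0]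

theorem strongMixingBound_alphaCoef [IsProbabilityMeasure P] (hX : ∀ i, Measurable (X i))
    (k n : ℕ) :
    StrongMixingBound P (coordSigma X (Iic k)) (coordSigma X (Ici (k + n))) (alphaCoef P X n) := by
  intro A B hA hB
  refine le_csSup ⟨1 / 4, ?_⟩ ⟨k, A, B, hA, hB, rfl⟩
  rintro _ ⟨k, A, B, -, hB, rfl⟩
  exact abs_measureReal_inter_sub_mul_le A (coordSigma_le hX _ B hB)

theorem alphaCoef_nonneg (P : Measure Ω) (X : ℕ → Ω → ℝ) (n : ℕ) : 0 ≤ alphaCoef P X n := by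
  refine Real.sSup_nonneg ?_
  rintro _ ⟨k, A, B, -, -, rfl⟩
  exact abs_nonneg _

theorem alphaCoef_le [IsProbabilityMeasure P] (hX : ∀ i, Measurable (X i)) (n : ℕ) :
    alphaCoef P X n ≤ 1 / 4 := by
  refine Real.sSup_le ?_ (by norm_num)
  rintro _ ⟨k, A, B, -, hB, rfl⟩
  exact abs_measureReal_inter_sub_mul_le A (coordSigma_le hX _ B hB)

end MixingCoefficient

section Huber

variable {y : ℝ}

theorem mul_sub_clip_nonpos (hy : |y| ≤ 1) (x : ℝ) : (y - clip 1 x) * (x - clip 1 x) ≤ 0 := by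
  obtain ⟨hy₁, hy₂⟩ := abs_le.mp hy
  rcases le_or_gt |x| 1 with hx | hx
  · rw [clip_of_abs_le hx, sub_self, mul_zero]
  · rcases lt_abs.mp hx with h | h
    · rw [clip, min_eq_right h.le, max_eq_right (by norm_num)]
      nlinarith
    · rw [clip, min_eq_left (by linarith), max_eq_left (by linarith)]
      nlinarith

theorem abs_clip_sub_clip_le (c x y : ℝ) : |clip c x - clip c y| ≤ |x - y| := by
  rw [clip, clip, max_comm (-c), max_comm (-c)]
  exact (abs_max_sub_max_le_abs _ _ _).trans
    ((abs_min_sub_min_le_max x c y c).trans_eq (by simp))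

/-- The Huber function: `x ^ 2 / 2` on `[-1, 1]` and `|x| - 1 / 2` outside. It controls convergence
to zero like the square, but needs only integrability in the tail. -/
noncomputable def huber (x : ℝ) : ℝ := clip 1 x * x - clip 1 x ^ 2 / 2

@[fun_prop]
theorem measurable_huber : Measurable huber := by
  unfold huber
  fun_prop

theorem huber_zero : huber 0 = 0 := by
  simp [huber, clip_of_abs_le (c := 1) (x := 0)]

theorem huber_add_le (x u : ℝ) : huber (x + u) ≤ huber x + clip 1 x * u + u ^ 2 / 2 := by
  unfold huber
  have hproj := mul_sub_clip_nonpos (abs_clip_le zero_le_one (x + u)) x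
  nlinarith [sq_nonneg (clip 1 (x + u) - clip 1 x - u)]

theorem sq_clip_le_huber (x : ℝ) : clip 1 x ^ 2 / 2 ≤ huber x := by
  unfold huber
  nlinarith [mul_sub_clip_nonpos (y := 0) (by simp) x]

theorem huber_nonneg (x : ℝ) : 0 ≤ huber x :=
  (by positivity : (0 : ℝ) ≤ clip 1 x ^ 2 / 2).trans (sq_clip_le_huber x)

theorem huber_le_abs (x : ℝ) : huber x ≤ |x| := by
  have hmul : clip 1 x * x ≤ |x| := by
    calc clip 1 x * x ≤ |clip 1 x * x| := le_abs_self _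
      _ = |clip 1 x| * |x| := abs_mul _ _
      _ ≤ |x| := mul_le_of_le_one_left (abs_nonneg _) (abs_clip_le zero_le_one x)
  unfold huber
  linarith [sq_nonneg (clip 1 x)]

theorem tendsto_zero_of_tendsto_huber {ι : Type*} {l : Filter ι} {x : ι → ℝ}
    (h : Tendsto (fun i => huber (x i)) l (nhds 0)) : Tendsto x l (nhds 0) := by
  have hsq : Tendsto (fun i => clip 1 (x i) ^ 2) l (nhds 0) := by
    refine squeeze_zero (fun _ => sq_nonneg _) (fun i => ?_) (by simpa using h.const_mul 2)
    linarith [sq_clip_le_huber (x i)]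
  have hclip : Tendsto (fun i => clip 1 (x i)) l (nhds 0) := by
    rw [tendsto_zero_iff_abs_tendsto_zero]
    simpa [Function.comp_def, Real.sqrt_sq_eq_abs] using hsq.sqrt
  refine hclip.congr' ?_
  filter_upwards [(tendsto_zero_iff_abs_tendsto_zero _).mp hclip |>.eventually_lt_const one_pos]
    with i hi
  have hi' : |clip 1 (x i)| < 1 := hi
  refine clip_of_abs_le (not_lt.mp fun hx => ?_)
  rcases lt_abs.mp hx with h | h
  · rw [clip, min_eq_right h.le, max_eq_right (by norm_num)] at hi'
    norm_num at hi'
  · rw [clip, min_eq_left (by linarith), max_eq_left (by linarith)] at hi'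
    norm_num at hi'

end Huber

section DominatedMixing

open ProbabilityTheory

variable {Ω : Type*} {mΩ : MeasurableSpace Ω} {P : Measure Ω} {Y W : ℕ → Ω → ℝ} {α : ℕ → ℝ}
  {Q : ℝ → ℝ} {M : ℝ}

/-- The sum of the first `k` terms of a process. -/
def partialSum (Y : ℕ → Ω → ℝ) (k : ℕ) (ω : Ω) : ℝ := ∑ i ∈ Finset.range k, Y i ω

theorem partialSum_zero (Y : ℕ → Ω → ℝ) : partialSum Y 0 = 0 :=
  funext fun _ => Finset.sum_range_zero _

theorem partialSum_succ (Y : ℕ → Ω → ℝ) (k : ℕ) (ω : Ω) :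
    partialSum Y (k + 1) ω = partialSum Y k ω + Y k ω :=
  Finset.sum_range_succ _ _

theorem measurable_coordSigma_partialSum (Y : ℕ → Ω → ℝ) {j k : ℕ} (hkj : k ≤ j + 1) :
    Measurable[coordSigma Y (Iic j)] (partialSum Y k) :=
  Finset.measurable_fun_sum _ fun _ hi =>
    measurable_coordSigma (Nat.lt_succ_iff.mp ((Finset.mem_range.mp hi).trans_le hkj))

/-- Centred α-mixing processes `Y` with mixing rate `α`, dominated by bounded processes `W` all of
whose marginals have the quantile function `Q`. -/
structure IsDominatedMixing (P : Measure Ω) (Y W : ℕ → Ω → ℝ) (α : ℕ → ℝ) (Q : ℝ → ℝ)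
    (M : ℝ) : Prop where
  measurable (i : ℕ) : Measurable (Y i)
  integral_eq_zero (i : ℕ) : ∫ ω, Y i ω ∂P = 0
  strongMixingBound (k n : ℕ) :
    StrongMixingBound P (coordSigma Y (Iic k)) (coordSigma Y (Ici (k + n))) (α n)
  coeff_nonneg (n : ℕ) : 0 ≤ α n
  coeff_lt_one (n : ℕ) : α n < 1
  abs_le (i : ℕ) (ω : Ω) : |Y i ω| ≤ W i ω
  le_bound (i : ℕ) (ω : Ω) : W i ω ≤ M
  bound_pos : 0 < M
  identDistrib (i : ℕ) : IdentDistrib Q (W i) uniform01 P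
  antitoneOn : AntitoneOn Q (Ioo 0 1)
  pos (u : ℝ) (hu : u ∈ Ioo (0 : ℝ) 1) : 0 < Q u

namespace IsDominatedMixing

theorem measurable_partialSum (h : IsDominatedMixing P Y W α Q M) (k : ℕ) :
    Measurable (partialSum Y k) :=
  Finset.measurable_fun_sum _ fun i _ => h.measurable i

theorem memLp [IsProbabilityMeasure P] (h : IsDominatedMixing P Y W α Q M) (i : ℕ) :
    MemLp (Y i) 2 P :=
  memLp_of_forall_mem_Icc (h.measurable i)
    (fun ω => _root_.abs_le.mp ((h.abs_le i ω).trans (h.le_bound i ω))) 2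

theorem memLp_quantile [IsProbabilityMeasure P] (h : IsDominatedMixing P Y W α Q M) :
    MemLp Q 2 uniform01 := by
  refine (h.identDistrib 0).symm.memLp_snd (MemLp.of_bound
    (h.identDistrib 0).aemeasurable_snd.aestronglyMeasurable M (.of_forall fun ω => ?_))
  rw [Real.norm_of_nonneg ((abs_nonneg _).trans (h.abs_le 0 ω))]
  exact h.le_bound 0 ω

theorem integrable_partialSum [IsProbabilityMeasure P] (h : IsDominatedMixing P Y W α Q M)
    (k : ℕ) : Integrable (partialSum Y k) P :=
  integrable_finsetSum _ fun i _ => (h.memLp i).integrable one_le_two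

theorem integral_sq_le [IsProbabilityMeasure P] (h : IsDominatedMixing P Y W α Q M) (i : ℕ) :
    ∫ ω, Y i ω ^ 2 ∂P ≤ ∫ u, Q u ^ 2 ∂uniform01 := by
  have hW2 : Integrable (fun ω => W i ω ^ 2) P :=
    ((h.identDistrib i).memLp_snd h.memLp_quantile).integrable_sq
  refine le_of_le_of_eq ?_
    ((h.identDistrib i).comp (measurable_id.pow_const 2)).integral_eq.symm
  exact integral_mono (h.memLp i).integrable_sq hW2 fun ω =>
    sq_le_sq.mpr ((h.abs_le i ω).trans (le_abs_self _))

theorem abs_covariance_clip_increment_le [IsProbabilityMeasure P]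
    (h : IsDominatedMixing P Y W α Q M) (j l : ℕ) :
    |cov[fun ω => clip 1 (partialSum Y (j + 1) ω) - clip 1 (partialSum Y j ω), Y (j + l); P]| ≤
      9 * ∫ u in Ioo 0 (α l), Q u ^ 2 := by
  refine (h.strongMixingBound j l).abs_covariance_le_setIntegral_sq (coordSigma_le h.measurable _)
    (coordSigma_le h.measurable _)
    (((measurable_clip 1).comp (measurable_coordSigma_partialSum Y le_rfl)).sub
      ((measurable_clip 1).comp (measurable_coordSigma_partialSum Y j.le_succ)))
    (measurable_coordSigma (mem_Ici.mpr le_rfl)) (fun ω => ?_) (h.abs_le (j + l)) h.antitoneOn h.pos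
    h.memLp_quantile (h.identDistrib j) (h.identDistrib (j + l)) (h.coeff_nonneg l)
    (h.coeff_lt_one l)
  refine (abs_clip_sub_clip_le _ _ _).trans ?_
  rw [partialSum_succ, add_sub_cancel_left]
  exact h.abs_le j ω

theorem abs_covariance_clip_partialSum_le_of_lag [IsProbabilityMeasure P]
    (h : IsDominatedMixing P Y W α Q M) (k q : ℕ) :
    |cov[fun ω => clip 1 (partialSum Y (k + 1 - q) ω), Y k; P]| ≤ 4 * M * α q := by
  rcases lt_or_ge k q with hkq | hqk
  · have hclip : (fun ω => clip 1 (partialSum Y (k + 1 - q) ω)) = fun _ => 0 := by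
      rw [Nat.sub_eq_zero_of_le hkq, partialSum_zero]
      ext ω
      exact clip_of_abs_le (by simp)
    rw [hclip, covariance_const_left, abs_zero]
    exact mul_nonneg (mul_nonneg zero_le_four h.bound_pos.le) (h.coeff_nonneg q)
  · obtain ⟨j, rfl⟩ := Nat.exists_eq_add_of_le' hqk
    rw [Nat.add_right_comm, Nat.add_sub_cancel]
    have hcov := (h.strongMixingBound j q).abs_covariance_le_of_abs_le
      (coordSigma_le h.measurable _) (coordSigma_le h.measurable _)
      ((measurable_clip 1).comp (measurable_coordSigma_partialSum Y le_rfl))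
      (measurable_coordSigma (mem_Ici.mpr le_rfl)) one_pos h.bound_pos
      (fun ω => abs_clip_le zero_le_one _)
      (fun ω => (h.abs_le (j + q) ω).trans (h.le_bound (j + q) ω))
    rwa [mul_one] at hcov

end IsDominatedMixing

/-- With truncated subtraction, so that the terms with `l > k` vanish. -/
theorem eq_add_sum_Ico_sub (f : ℕ → ℝ) (k : ℕ) {q : ℕ} (hq : 1 ≤ q) :
    f k = f (k + 1 - q) + ∑ l ∈ Finset.Ico 1 q, (f (k + 1 - l) - f (k - l)) := by
  induction q, hq using Nat.le_induction with
  | base => simp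
  | succ q hq ih =>
    rw [Finset.sum_Ico_succ_top hq, Nat.add_sub_add_right]
    linarith

namespace IsDominatedMixing

theorem abs_covariance_clip_partialSum_le [IsProbabilityMeasure P]
    (h : IsDominatedMixing P Y W α Q M) (k : ℕ) {q : ℕ} (hq : 1 ≤ q) :
    |cov[fun ω => clip 1 (partialSum Y k ω), Y k; P]| ≤
      4 * M * α q + 9 * ∑ l ∈ Finset.Ico 1 q, ∫ u in Ioo 0 (α l), Q u ^ 2 := by
  have memLp_clip' (j : ℕ) : MemLp (fun ω => clip 1 (partialSum Y j ω)) 2 P :=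
    memLp_clip zero_le_one (h.measurable_partialSum j)
  have memLp_increment (l : ℕ) : MemLp (fun ω => clip 1 (partialSum Y (k + 1 - l) ω)
      - clip 1 (partialSum Y (k - l) ω)) 2 P :=
    (memLp_clip' _).sub (memLp_clip' _)
  have hsplit : (fun ω => clip 1 (partialSum Y k ω)) =
      (fun ω => clip 1 (partialSum Y (k + 1 - q) ω)) + fun ω => ∑ l ∈ Finset.Ico 1 q,
        (clip 1 (partialSum Y (k + 1 - l) ω) - clip 1 (partialSum Y (k - l) ω)) := by
    ext ω
    exact eq_add_sum_Ico_sub (fun j => clip 1 (partialSum Y j ω)) k hq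
  rw [hsplit, covariance_add_left (memLp_clip' _)
    (memLp_finsetSum _ fun l _ => memLp_increment l) (h.memLp k),
    covariance_fun_sum_left' (fun l _ => memLp_increment l) (h.memLp k), Finset.mul_sum]
  refine (abs_add_le _ _).trans (add_le_add (h.abs_covariance_clip_partialSum_le_of_lag k q)
    ((Finset.abs_sum_le_sum_abs _ _).trans (Finset.sum_le_sum fun l _ => ?_)))
  rcases le_or_gt l k with hlk | hkl
  · obtain ⟨j, rfl⟩ := Nat.exists_eq_add_of_le' hlk
    rw [Nat.add_right_comm, Nat.add_sub_cancel, Nat.add_sub_cancel]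
    exact h.abs_covariance_clip_increment_le j l
  · rw [Nat.sub_eq_zero_of_le hkl, Nat.sub_eq_zero_of_le hkl.le]
    simp only [sub_self, covariance_const_left, abs_zero]
    exact mul_nonneg (by norm_num) (integral_nonneg fun _ => sq_nonneg _)

theorem integrable_huber_partialSum [IsProbabilityMeasure P] (h : IsDominatedMixing P Y W α Q M)
    (k : ℕ) : Integrable (fun ω => huber (partialSum Y k ω)) P := by
  refine (h.integrable_partialSum k).mono
    (measurable_huber.comp (h.measurable_partialSum k)).aestronglyMeasurable
    (.of_forall fun ω => ?_)
  rw [Real.norm_of_nonneg (huber_nonneg _)]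
  exact huber_le_abs _

theorem integral_huber_partialSum_succ_le [IsProbabilityMeasure P]
    (h : IsDominatedMixing P Y W α Q M) (k : ℕ) :
    ∫ ω, huber (partialSum Y (k + 1) ω) ∂P ≤ (∫ ω, huber (partialSum Y k ω) ∂P)
      + cov[fun ω => clip 1 (partialSum Y k ω), Y k; P] + ∫ u, Q u ^ 2 ∂uniform01 := by
  have hclip : MemLp (fun ω => clip 1 (partialSum Y k ω)) 2 P :=
    memLp_clip zero_le_one (h.measurable_partialSum k)
  have hcov : cov[fun ω => clip 1 (partialSum Y k ω), Y k; P] =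
      ∫ ω, clip 1 (partialSum Y k ω) * Y k ω ∂P := by
    rw [covariance_eq_sub hclip (h.memLp k), h.integral_eq_zero k, mul_zero, sub_zero]
    rfl
  have hmul : Integrable (fun ω => clip 1 (partialSum Y k ω) * Y k ω) P :=
    hclip.integrable_mul (h.memLp k)
  have hsq : Integrable (fun ω => Y k ω ^ 2 / 2) P := (h.memLp k).integrable_sq.div_const 2
  have hhuber := h.integrable_huber_partialSum
  calc ∫ ω, huber (partialSum Y (k + 1) ω) ∂P
      ≤ ∫ ω, (huber (partialSum Y k ω) + clip 1 (partialSum Y k ω) * Y k ω + Y k ω ^ 2 / 2) ∂P := by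
        refine integral_mono (hhuber _) (((hhuber k).add hmul).add hsq) fun ω => ?_
        rw [partialSum_succ]
        exact huber_add_le _ _
    _ = (∫ ω, huber (partialSum Y k ω) ∂P) + cov[fun ω => clip 1 (partialSum Y k ω), Y k; P]
        + (∫ ω, Y k ω ^ 2 ∂P) / 2 := by
        rw [hcov, ← integral_add (hhuber k) hmul, ← integral_div]
        exact integral_add ((hhuber k).add hmul) hsq
    _ ≤ _ := by
        have hY2 : 0 ≤ ∫ ω, Y k ω ^ 2 ∂P := integral_nonneg fun _ => sq_nonneg _
        linarith [h.integral_sq_le k]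

theorem integral_huber_partialSum_le [IsProbabilityMeasure P] (h : IsDominatedMixing P Y W α Q M)
    (n : ℕ) {q : ℕ} (hq : 1 ≤ q) :
    ∫ ω, huber (partialSum Y n ω) ∂P ≤ n * (4 * M * α q + 9 * ((∫ u, Q u ^ 2 ∂uniform01)
      + ∑ l ∈ Finset.Ico 1 q, ∫ u in Ioo 0 (α l), Q u ^ 2)) := by
  induction n with
  | zero => simp [partialSum_zero, huber_zero]
  | succ n ih =>
    have hcov := (le_abs_self _).trans (h.abs_covariance_clip_partialSum_le n hq)
    have hQ2 : 0 ≤ ∫ u, Q u ^ 2 ∂uniform01 := integral_nonneg fun _ => sq_nonneg _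
    push_cast
    linarith [h.integral_huber_partialSum_succ_le n]

end IsDominatedMixing

end DominatedMixing

section RightInverse

open scoped Topology

variable {h : ℝ → ℝ} {x y : ℝ}

theorem bddAbove_setOf_lt_of_tendsto_zero (hh : Tendsto h atTop (𝓝 0)) (hy : 0 < y) :
    BddAbove {x | 0 ≤ x ∧ y < h x} := by
  obtain ⟨b, hb⟩ := eventually_atTop.mp (hh.eventually_lt_const hy)
  exact ⟨b, fun x hx => le_of_not_gt fun hbx => (hb x hbx.le).not_gt hx.2⟩

theorem rcInv_nonneg (h : ℝ → ℝ) (y : ℝ) : 0 ≤ rcInv h y :=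
  Real.sSup_nonneg fun _ hx => hx.1

theorem le_rcInv (hh : Tendsto h atTop (𝓝 0)) (hy : 0 < y) (hx : 0 ≤ x) (hyx : y < h x) :
    x ≤ rcInv h y :=
  le_csSup (bddAbove_setOf_lt_of_tendsto_zero hh hy) ⟨hx, hyx⟩

theorem exists_lt_of_lt_rcInv (hx : 0 ≤ x) (hxy : x < rcInv h y) : ∃ z > x, y < h z := by
  have hne : {x | 0 ≤ x ∧ y < h x}.Nonempty := by
    by_contra hempty
    rw [rcInv, not_nonempty_iff_eq_empty.mp hempty, Real.sSup_empty] at hxy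
    exact hxy.not_ge hx
  obtain ⟨z, hz, hxz⟩ := exists_lt_of_lt_csSup hne hxy
  exact ⟨z, hxz, hz.2⟩

theorem antitoneOn_rcInv (hh : Tendsto h atTop (𝓝 0)) : AntitoneOn (rcInv h) (Ioi 0) :=
  fun _ hy _ _ hyz => Real.sSup_le (fun _ hx => le_rcInv hh hy hx.1 (hyz.trans_lt hx.2))
    (rcInv_nonneg _ _)

theorem alphaExt_natCast (α : ℕ → ℝ) {q : ℕ} (hq : 1 ≤ q) : alphaExt α q = α q := by
  rw [alphaExt, if_neg (not_lt.mpr (by exact_mod_cast hq)), Nat.floor_natCast]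

theorem tendsto_alphaExt {α : ℕ → ℝ} (hα : Tendsto α atTop (𝓝 0)) :
    Tendsto (alphaExt α) atTop (𝓝 0) := by
  refine (hα.comp tendsto_nat_floor_atTop).congr' ?_
  filter_upwards [eventually_ge_atTop 1] with t ht
  exact (if_neg (not_lt.mpr ht)).symm

end RightInverse

section TailQuantile

open ProbabilityTheory
open scoped Topology

variable {Ω : Type*} {mΩ : MeasurableSpace Ω} {P : Measure Ω} [IsProbabilityMeasure P]
  {W : Ω → ℝ} {u x : ℝ}

theorem distFun_eq_cdf (hW : Measurable W) : distFun P W = cdf (P.map W) := by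
  have := Measure.isProbabilityMeasure_map (μ := P) hW.aemeasurable
  ext x
  rw [cdf_eq_real, map_measureReal_apply hW measurableSet_Iic]
  rfl

theorem tendsto_one_sub_distFun (hW : Measurable W) :
    Tendsto (fun x => 1 - distFun P W x) atTop (𝓝 0) := by
  rw [distFun_eq_cdf hW]
  simpa using (tendsto_cdf_atTop (P.map W)).const_sub 1

theorem one_sub_distFun (hW : Measurable W) (x : ℝ) :
    1 - distFun P W x = P.real {ω | x < W ω} := by
  rw [distFun, ← Measure.real, ← probReal_compl_eq_one_sub (measurableSet_le hW measurable_const)]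
  simp only [compl_ofPred, not_le]

/-- The upper quantile function of `W`: the right-continuous inverse of its survival function. -/
noncomputable def tailQuantile (P : Measure Ω) (W : Ω → ℝ) : ℝ → ℝ :=
  rcInv fun x => 1 - distFun P W x

theorem antitoneOn_tailQuantile (hW : Measurable W) :
    AntitoneOn (tailQuantile P W) (Ioo 0 1) :=
  (antitoneOn_rcInv (tendsto_one_sub_distFun hW)).mono fun _ hu => hu.1

theorem lt_tailQuantile_iff (hW : Measurable W) (hu : 0 < u) (hx : 0 ≤ x) :
    x < tailQuantile P W u ↔ u < 1 - distFun P W x := by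
  constructor
  · intro hxu
    obtain ⟨z, hxz, huz⟩ := exists_lt_of_lt_rcInv hx hxu
    refine huz.trans_le (sub_le_sub_left ?_ 1)
    rw [distFun_eq_cdf hW]
    exact monotone_cdf _ hxz.le
  · intro hux
    have hright : ContinuousWithinAt (fun x => 1 - distFun P W x) (Ioi x) x := by
      rw [distFun_eq_cdf hW]
      exact continuousWithinAt_const.sub (((cdf _).right_continuous x).mono Ioi_subset_Ici_self)
    obtain ⟨z, huz, hxz⟩ :=
      ((hright.tendsto.eventually_const_lt hux).and self_mem_nhdsWithin).exists
    have hxz' : x < z := hxz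
    exact hxz'.trans_le (le_rcInv (tendsto_one_sub_distFun hW) hu (hx.trans hxz'.le) huz)

theorem uniform01_Ici {p : ℝ} (hp : 0 ≤ p) : uniform01 (Ici p) = ENNReal.ofReal (1 - p) := by
  rw [Measure.restrict_apply measurableSet_Ici, ← Real.volume_Ioo]
  refine le_antisymm ?_ (measure_mono fun u hu => ⟨hu.1.le, hp.trans_lt hu.1, hu.2⟩)
  rw [Real.volume_Ioo, ← Real.volume_Ico]
  exact measure_mono fun u hu => ⟨hu.1, hu.2.2⟩

theorem identDistrib_tailQuantile (hW : Measurable W) (hW0 : ∀ ω, 0 ≤ W ω) :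
    IdentDistrib (tailQuantile P W) W uniform01 P := by
  have hQ : AEMeasurable (tailQuantile P W) uniform01 :=
    aemeasurable_restrict_of_antitoneOn measurableSet_Ioo (antitoneOn_tailQuantile hW)
  refine ⟨hQ, hW.aemeasurable, ?_⟩
  have := Measure.isProbabilityMeasure_map (μ := P) hW.aemeasurable
  have := Measure.isProbabilityMeasure_map hQ
  refine Measure.ext_of_Iic _ _ fun x => ?_
  rw [Measure.map_apply_of_aemeasurable hQ measurableSet_Iic,
    Measure.map_apply hW measurableSet_Iic]
  rcases lt_or_ge x 0 with hx | hx
  · have hQx : tailQuantile P W ⁻¹' Iic x = ∅ :=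
      eq_empty_of_forall_notMem fun u hu => (hx.trans_le (rcInv_nonneg _ u)).not_ge hu
    have hWx : W ⁻¹' Iic x = ∅ :=
      eq_empty_of_forall_notMem fun ω hω => (hx.trans_le (hW0 ω)).not_ge hω
    rw [hQx, hWx, measure_empty, measure_empty]
  · have hcongr : tailQuantile P W ⁻¹' Iic x =ᵐ[uniform01] Ici (1 - distFun P W x) := by
      filter_upwards [ae_restrict_mem measurableSet_Ioo] with u hu
      exact propext (not_lt.symm.trans ((lt_tailQuantile_iff hW hu.1 hx).not.trans not_lt))
    have hsurvival : 0 ≤ 1 - distFun P W x := by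
      rw [one_sub_distFun hW]
      exact measureReal_nonneg
    rw [measure_congr hcongr, uniform01_Ici hsurvival, sub_sub_cancel, distFun,
      ENNReal.ofReal_toReal (measure_ne_top _ _)]
    rfl

theorem one_le_tailQuantile (hW : Measurable W) (hW1 : ∀ ω, 1 ≤ W ω) (hu : u ∈ Ioo (0 : ℝ) 1) :
    1 ≤ tailQuantile P W u := by
  by_contra! hlt
  have hsurvival : 1 - distFun P W (tailQuantile P W u) = 1 := by
    have huniv : {ω | tailQuantile P W u < W ω} = univ :=
      eq_univ_of_forall fun ω => hlt.trans_le (hW1 ω)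
    rw [one_sub_distFun hW, huniv, probReal_univ]
  exact lt_irrefl (tailQuantile P W u)
    ((lt_tailQuantile_iff hW hu.1 (rcInv_nonneg _ u)).mpr (hu.2.trans_eq hsurvival.symm))

end TailQuantile

section LagWeight

variable {n b t M N : ℝ}

/-- The weight `t` of a summand of size `t` whose influence lasts for `b` steps, truncated at `n`
and damped by `b t / n` when `b t < n`. Its integral at `b = 1 + α^→(u)`, `t = Q(u)` bounds every
error term of the law of large numbers at time `n`. -/
noncomputable def lagWeight (n b t : ℝ) : ℝ := min t n * min 1 (b * t / n)

theorem lagWeight_nonneg (hn : 0 ≤ n) (hb : 0 ≤ b) (ht : 0 ≤ t) : 0 ≤ lagWeight n b t :=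
  mul_nonneg (le_min ht hn) (le_min zero_le_one (div_nonneg (mul_nonneg hb ht) hn))

theorem lagWeight_le (hn : 0 ≤ n) (ht : 0 ≤ t) : lagWeight n b t ≤ t :=
  (mul_le_of_le_one_right (le_min ht hn) (min_le_left _ _)).trans (min_le_left _ _)

theorem lagWeight_of_le_mul (hn : 0 < n) (h : n ≤ b * t) : lagWeight n b t = min t n := by
  rw [lagWeight, min_eq_left ((one_le_div hn).mpr h), mul_one]

theorem lagWeight_of_mul_le (hn : 0 < n) (hb : 1 ≤ b) (ht : 0 ≤ t) (h : b * t ≤ n) :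
    lagWeight n b t = b * t ^ 2 / n := by
  rw [lagWeight, min_eq_right ((div_le_one hn).mpr h),
    min_eq_left ((le_mul_of_one_le_left ht hb).trans h)]
  ring

theorem sq_min_mul_le_lagWeight (hn : 0 < n) (hM : 0 ≤ M) (hMn : M ≤ n) (hb : 1 ≤ b)
    (ht : 0 ≤ t) (hN : 0 ≤ N) (hNb : N ≤ b) (hNM : N * M ≤ 2 * n) :
    min t M ^ 2 * N ≤ n * (2 * lagWeight n b t) := by
  have hw : 0 ≤ min t M := le_min ht hM
  rcases le_total n (b * t) with h | h
  · rw [lagWeight_of_le_mul hn h]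
    calc min t M ^ 2 * N = min t M * (N * min t M) := by ring
      _ ≤ min t M * (N * M) :=
        mul_le_mul_of_nonneg_left (mul_le_mul_of_nonneg_left (min_le_right _ _) hN) hw
      _ ≤ min t n * (2 * n) := by gcongr
      _ = n * (2 * min t n) := by ring
  · rw [lagWeight_of_mul_le hn hb ht h]
    calc min t M ^ 2 * N ≤ t ^ 2 * b := by gcongr; exact min_le_left _ _
      _ ≤ 2 * (t ^ 2 * b) := by
        linarith [mul_nonneg (sq_nonneg t) (zero_le_one.trans hb)]
      _ = n * (2 * (b * t ^ 2 / n)) := by field_simp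

theorem measurable_lagWeight (n : ℝ) : Measurable fun p : ℝ × ℝ => lagWeight n p.1 p.2 := by
  unfold lagWeight
  fun_prop

end LagWeight

section LagCount

open scoped Topology

variable {α : ℕ → ℝ} {q : ℕ} {a u : ℝ}

/-- The number of lags `l < q` at which the mixing rate `α` exceeds `u`; lag `0` always counts. -/
noncomputable def lagCount (α : ℕ → ℝ) (q : ℕ) (u : ℝ) : ℕ :=
  1 + ((Finset.Ico 1 q).filter fun l => u < α l).card

theorem lagCount_le (hq : 1 ≤ q) : lagCount α q u ≤ q := by
  have hcard := Finset.card_filter_le (Finset.Ico 1 q) fun l => u < α l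
  rw [Nat.card_Ico] at hcard
  rw [lagCount]
  omega

theorem natCast_le_rcInv_alphaExt (hα : Tendsto α atTop (𝓝 0)) (hu : 0 < u) {l : ℕ} (hl : 1 ≤ l)
    (hul : u < α l) : (l : ℝ) ≤ rcInv (alphaExt α) u :=
  le_rcInv (tendsto_alphaExt hα) hu l.cast_nonneg (by rwa [alphaExt_natCast α hl])

theorem lagCount_le_one_add_rcInv (hα : Tendsto α atTop (𝓝 0)) (hu : 0 < u) :
    (lagCount α q u : ℝ) ≤ 1 + rcInv (alphaExt α) u := by
  have hsub : ((Finset.Ico 1 q).filter fun l => u < α l) ⊆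
      Finset.Icc 1 ⌊rcInv (alphaExt α) u⌋₊ := by
    intro l hl
    obtain ⟨hlq, hul⟩ := Finset.mem_filter.mp hl
    have hl1 := (Finset.mem_Ico.mp hlq).1
    exact Finset.mem_Icc.mpr ⟨hl1, Nat.le_floor (natCast_le_rcInv_alphaExt hα hu hl1 hul)⟩
  have hcard := Finset.card_le_card hsub
  rw [Nat.card_Icc, Nat.add_sub_cancel] at hcard
  rw [lagCount, Nat.cast_add, Nat.cast_one]
  gcongr
  exact (Nat.cast_le.mpr hcard).trans (Nat.floor_le (rcInv_nonneg _ _))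

theorem setIntegral_Ioo_zero_eq_integral_indicator (ha : a ≤ 1) (g : ℝ → ℝ) :
    ∫ u in Ioo 0 a, g u = ∫ u, (Iio a).indicator g u ∂uniform01 := by
  rw [integral_indicator measurableSet_Iio, Measure.restrict_restrict measurableSet_Iio,
    inter_comm, Ioo_inter_Iio, min_eq_right ha]

theorem integral_mul_lagCount {g : ℝ → ℝ} (hg : Integrable g uniform01) (hα : ∀ l, α l ≤ 1) :
    ∫ u, g u * lagCount α q u ∂uniform01 =
      (∫ u, g u ∂uniform01) + ∑ l ∈ Finset.Ico 1 q, ∫ u in Ioo 0 (α l), g u := by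
  have hind : ∀ l ∈ Finset.Ico 1 q, Integrable ((Iio (α l)).indicator g) uniform01 :=
    fun l _ => hg.indicator measurableSet_Iio
  simp_rw [fun l => setIntegral_Ioo_zero_eq_integral_indicator (hα l)]
  rw [← integral_finsetSum _ hind, ← integral_add hg (integrable_finsetSum _ hind)]
  congr with u
  simp only [indicator_apply, mem_Iio]
  rw [← Finset.sum_filter, Finset.sum_const, lagCount, nsmul_eq_mul, Nat.cast_add, Nat.cast_one]
  ring

end LagCount

section MixingWeight

open scoped Topology

variable {α : ℕ → ℝ} {Q : ℝ → ℝ} {n u : ℝ}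

/-- The lag weight at time `n` of a summand of size `Q u` whose influence lasts until the mixing
rate `α` drops below `u`. -/
noncomputable def mixingWeight (α : ℕ → ℝ) (Q : ℝ → ℝ) (n u : ℝ) : ℝ :=
  lagWeight n (1 + rcInv (alphaExt α) u) (Q u)

theorem mixingWeight_nonneg (hn : 0 ≤ n) (hQ0 : 0 ≤ Q u) : 0 ≤ mixingWeight α Q n u :=
  lagWeight_nonneg hn (add_nonneg zero_le_one (rcInv_nonneg _ _)) hQ0

theorem mixingWeight_of_le_mul (hn : 0 < n) (hQ0 : 0 ≤ Q u)
    (h : n ≤ rcInv (alphaExt α) u * Q u) : mixingWeight α Q n u = min (Q u) n :=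
  lagWeight_of_le_mul hn (h.trans (by gcongr; exact le_add_of_nonneg_left zero_le_one))

theorem mixingWeight_of_le (hn : 0 < n) (h : n ≤ Q u) : mixingWeight α Q n u = n :=
  (lagWeight_of_le_mul hn (h.trans (le_mul_of_one_le_left (hn.le.trans h)
    (le_add_of_nonneg_right (rcInv_nonneg _ _))))).trans (min_eq_right h)

theorem integrable_mixingWeight (hα : Tendsto α atTop (𝓝 0)) (hQ : Integrable Q uniform01)
    (hQ0 : ∀ u, 0 ≤ Q u) (hn : 0 ≤ n) : Integrable (mixingWeight α Q n) uniform01 := by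
  have hA : AEMeasurable (rcInv (alphaExt α)) uniform01 :=
    aemeasurable_restrict_of_antitoneOn measurableSet_Ioo
      ((antitoneOn_rcInv (tendsto_alphaExt hα)).mono fun _ hu => hu.1)
  refine hQ.mono' ((measurable_lagWeight n).comp_aemeasurable
    ((hA.const_add 1).prodMk hQ.aemeasurable)).aestronglyMeasurable (.of_forall fun u => ?_)
  exact (Real.norm_of_nonneg (mixingWeight_nonneg hn (hQ0 u))).trans_le (lagWeight_le hn (hQ0 u))

end MixingWeight

section BlockTruncation

open scoped Topology

/-- A block length `q` and a truncation level `M`, of order `n / q`, for sums of `n` terms with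
upper quantile function `Q` and mixing rate `α`: beyond lag `q` the rate is below the tail
probability of `Q` at `n / q`, and `Q` exceeds `M < n` only where the influence of a summand of
size `Q u` outlasts `n / Q u` steps. -/
structure IsBlockTruncation (α : ℕ → ℝ) (Q : ℝ → ℝ) (n q : ℕ) (M : ℝ) : Prop where
  one_le_length : 1 ≤ q
  one_le_level : 1 ≤ M
  level_le : M ≤ n
  length_mul_level_le : q * M ≤ 2 * n
  div_le (u : ℝ) (hu : u ∈ Ioo (0 : ℝ) 1) (huq : u < α q) : n / q ≤ Q u
  le_mul (u : ℝ) (hu : u ∈ Ioo (0 : ℝ) 1) (hMu : M < Q u) (hMn : M < n) :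
    n ≤ rcInv (alphaExt α) u * Q u

section Existence

variable {Ω : Type*} {mΩ : MeasurableSpace Ω} {P : Measure Ω} [IsProbabilityMeasure P]
  {W : Ω → ℝ} {α : ℕ → ℝ} {u x : ℝ}

theorem le_tailQuantile (hW : Measurable W) (hu : 0 < u) (h : u < P.real {ω | x ≤ W ω}) :
    x ≤ tailQuantile P W u := by
  refine le_of_forall_lt fun y hy => ?_
  rcases lt_or_ge y 0 with hy0 | hy0
  · exact hy0.trans_le (rcInv_nonneg _ _)
  · rw [lt_tailQuantile_iff hW hu hy0, one_sub_distFun hW]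
    exact h.trans_le (measureReal_mono fun ω hω => hy.trans_le hω)

theorem lt_measureReal_of_lt_tailQuantile (hW : Measurable W) (hu : 0 < u) (hx : 0 ≤ x)
    (h : x < tailQuantile P W u) : u < P.real {ω | x ≤ W ω} := by
  rw [lt_tailQuantile_iff hW hu hx, one_sub_distFun hW] at h
  exact h.trans_le (measureReal_mono fun ω hω => (show x < W ω from hω).le)

theorem exists_lt_le_succ_and_lt {a b : ℕ → ℝ} {n : ℕ} (hn : 1 ≤ n) (h : a n ≤ b n) :
    ∃ p < n, a (p + 1) ≤ b (p + 1) ∧ (1 ≤ p → b p < a p) := by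
  classical
  have hex : ∃ p, a (p + 1) ≤ b (p + 1) := ⟨n - 1, by rwa [Nat.sub_add_cancel hn]⟩
  refine ⟨Nat.find hex, ?_, Nat.find_spec hex, fun hp => ?_⟩
  · have hle := Nat.find_min' hex (m := n - 1) (by rwa [Nat.sub_add_cancel hn])
    omega
  · have hmin := not_le.mp (Nat.find_min hex (Nat.sub_one_lt_of_lt hp))
    rwa [Nat.sub_add_cancel hp] at hmin

theorem exists_isBlockTruncation (hW : Measurable W) (hW1 : ∀ ω, 1 ≤ W ω)
    (hα : Tendsto α atTop (𝓝 0)) (hα1 : ∀ l, α l ≤ 1) {n : ℕ} (hn : 1 ≤ n) :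
    ∃ (q : ℕ) (M : ℝ), IsBlockTruncation α (tailQuantile P W) n q M := by
  have hn0 : (0 : ℝ) < n := by exact_mod_cast hn
  have hself : α n ≤ P.real {ω | (n : ℝ) / n ≤ W ω} := by
    have huniv : {ω | (n : ℝ) / n ≤ W ω} = univ := eq_univ_of_forall fun ω =>
      (div_self hn0.ne').trans_le (hW1 ω)
    rw [huniv, probReal_univ]
    exact hα1 n
  obtain ⟨p, hpn, hp, hmin⟩ :=
    exists_lt_le_succ_and_lt (b := fun q : ℕ => P.real {ω | (n : ℝ) / q ≤ W ω}) hn hself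
  have hr0 : (0 : ℝ) < (max 1 p : ℕ) := by exact_mod_cast le_max_left 1 p
  refine ⟨p + 1, n / (max 1 p : ℕ), p.succ_pos, ?_, ?_, ?_, ?_, ?_⟩
  · rw [one_le_div hr0]
    exact_mod_cast max_le hn hpn.le
  · exact div_le_self hn0.le (by exact_mod_cast le_max_left 1 p)
  · have hlength : ((p + 1 : ℕ) : ℝ) ≤ 2 * (max 1 p : ℕ) := by
      exact_mod_cast (by omega : p + 1 ≤ 2 * max 1 p)
    rw [mul_div_assoc', div_le_iff₀ hr0]
    linarith [mul_le_mul_of_nonneg_right hlength hn0.le]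
  · exact fun u hu hup => le_tailQuantile hW hu.1 (hup.trans_le hp)
  · intro u hu hMu hMn
    have hp1 : 1 ≤ p := by
      by_contra! hp0
      rw [Nat.lt_one_iff.mp hp0, Nat.max_eq_left zero_le_one, Nat.cast_one, div_one] at hMn
      exact hMn.false
    rw [max_eq_right hp1] at hMu hr0
    have hlt : u < α p :=
      (lt_measureReal_of_lt_tailQuantile hW hu.1 (div_nonneg hn0.le hr0.le) hMu).trans (hmin hp1)
    calc (n : ℝ) = p * (n / p) := (mul_div_cancel₀ _ hr0.ne').symm
      _ ≤ _ := mul_le_mul (natCast_le_rcInv_alphaExt hα hu.1 hp1 hlt) hMu.le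
        (div_nonneg hn0.le hr0.le) (rcInv_nonneg _ _)

end Existence

namespace IsBlockTruncation

variable {α : ℕ → ℝ} {Q : ℝ → ℝ} {n q : ℕ} {M u : ℝ}

theorem level_nonneg (h : IsBlockTruncation α Q n q M) : 0 ≤ M :=
  zero_le_one.trans h.one_le_level

theorem cast_pos (h : IsBlockTruncation α Q n q M) : (0 : ℝ) < n :=
  zero_lt_one.trans_le (h.one_le_level.trans h.level_le)

theorem max_min_sub_le (h : IsBlockTruncation α Q n q M) (hu : u ∈ Ioo (0 : ℝ) 1)
    (hQ0 : 0 ≤ Q u) : max (min (Q u) n - M) 0 ≤ mixingWeight α Q n u := by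
  refine max_le ?_ (mixingWeight_nonneg h.cast_pos.le hQ0)
  rcases le_or_gt (min (Q u) n) M with hle | hlt
  · linarith [mixingWeight_nonneg (α := α) h.cast_pos.le hQ0]
  · obtain ⟨hMu, hMn⟩ := lt_min_iff.mp hlt
    rw [mixingWeight_of_le_mul h.cast_pos hQ0 (h.le_mul u hu hMu hMn)]
    exact sub_le_self _ h.level_nonneg

theorem level_le_mixingWeight (h : IsBlockTruncation α Q n q M) (hα : Tendsto α atTop (𝓝 0))
    (hu : u ∈ Ioo (0 : ℝ) 1) (hQ0 : 0 ≤ Q u) (huq : u < α q) :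
    M ≤ 2 * mixingWeight α Q n u := by
  have hq0 : (0 : ℝ) < q := by exact_mod_cast h.one_le_length
  have hn : (n : ℝ) ≤ q * Q u := (div_le_iff₀' hq0).mp (h.div_le u hu huq)
  have hqA := natCast_le_rcInv_alphaExt hα hu.1 h.one_le_length huq
  rw [mixingWeight_of_le_mul h.cast_pos hQ0 (hn.trans (by gcongr)),
    mul_min_of_nonneg _ _ zero_le_two]
  refine le_min (le_of_mul_le_mul_left ?_ hq0) (by linarith [h.level_le, h.cast_pos])
  linarith [h.length_mul_level_le]

theorem sq_mul_lagCount_le (h : IsBlockTruncation α Q n q M) (hα : Tendsto α atTop (𝓝 0))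
    (hu : 0 < u) (hQ0 : 0 ≤ Q u) :
    min (Q u) M ^ 2 * lagCount α q u ≤ n * (2 * mixingWeight α Q n u) := by
  have hq : (lagCount α q u : ℝ) ≤ q := by exact_mod_cast lagCount_le h.one_le_length
  exact sq_min_mul_le_lagWeight h.cast_pos h.level_nonneg h.level_le
    (le_add_of_nonneg_right (rcInv_nonneg _ _)) hQ0 (Nat.cast_nonneg _)
    (lagCount_le_one_add_rcInv hα hu)
    ((mul_le_mul_of_nonneg_right hq h.level_nonneg).trans h.length_mul_level_le)

theorem integral_max_min_sub_le (h : IsBlockTruncation α Q n q M) (hα : Tendsto α atTop (𝓝 0))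
    (hQ : Integrable Q uniform01) (hQ0 : ∀ u, 0 ≤ Q u) :
    ∫ u, max (min (Q u) n - M) 0 ∂uniform01 ≤ ∫ u, mixingWeight α Q n u ∂uniform01 := by
  refine integral_mono_of_nonneg (.of_forall fun u => le_max_right _ _)
    (integrable_mixingWeight hα hQ hQ0 h.cast_pos.le) ?_
  filter_upwards [ae_restrict_mem measurableSet_Ioo] with u hu
  exact h.max_min_sub_le hu (hQ0 u)

theorem level_mul_coeff_le (h : IsBlockTruncation α Q n q M) (hα : Tendsto α atTop (𝓝 0))
    (hα0 : 0 ≤ α q) (hα1 : α q ≤ 1) (hQ : Integrable Q uniform01) (hQ0 : ∀ u, 0 ≤ Q u) :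
    M * α q ≤ 2 * ∫ u, mixingWeight α Q n u ∂uniform01 := by
  have hconst : M * α q = ∫ u, (Iio (α q)).indicator (fun _ => M) u ∂uniform01 := by
    rw [← setIntegral_Ioo_zero_eq_integral_indicator hα1]
    simp [hα0, mul_comm]
  rw [hconst, ← integral_const_mul]
  refine integral_mono_of_nonneg
    (.of_forall fun u => indicator_nonneg (fun _ _ => h.level_nonneg) u)
    ((integrable_mixingWeight hα hQ hQ0 h.cast_pos.le).const_mul 2) ?_
  filter_upwards [ae_restrict_mem measurableSet_Ioo] with u hu
  refine indicator_apply_le' (fun huq => h.level_le_mixingWeight hα hu (hQ0 u) huq) fun _ => ?_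
  exact mul_nonneg zero_le_two (mixingWeight_nonneg h.cast_pos.le (hQ0 u))

theorem integral_sq_add_sum_le (h : IsBlockTruncation α Q n q M) (hα : Tendsto α atTop (𝓝 0))
    (hα1 : ∀ l, α l ≤ 1) (hQ : Integrable Q uniform01) (hQ0 : ∀ u, 0 ≤ Q u) :
    (∫ u, min (Q u) M ^ 2 ∂uniform01)
        + ∑ l ∈ Finset.Ico 1 q, ∫ u in Ioo 0 (α l), min (Q u) M ^ 2 ≤
      n * (2 * ∫ u, mixingWeight α Q n u ∂uniform01) := by
  have hmin : Integrable (fun u => min (Q u) M ^ 2) uniform01 := by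
    refine Integrable.of_bound
      ((hQ.aemeasurable.min aemeasurable_const).pow_const 2).aestronglyMeasurable (M ^ 2)
      (.of_forall fun u => ?_)
    rw [Real.norm_of_nonneg (sq_nonneg _)]
    exact pow_le_pow_left₀ (le_min (hQ0 u) h.level_nonneg) (min_le_right _ _) 2
  rw [← integral_mul_lagCount hmin hα1, ← integral_const_mul, ← integral_const_mul]
  refine integral_mono_of_nonneg
    (.of_forall fun u => mul_nonneg (sq_nonneg _) (Nat.cast_nonneg _))
    (((integrable_mixingWeight hα hQ hQ0 h.cast_pos.le).const_mul 2).const_mul _) ?_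
  filter_upwards [ae_restrict_mem measurableSet_Ioo] with u hu
  exact h.sq_mul_lagCount_le hα hu.1 (hQ0 u)

end IsBlockTruncation

end BlockTruncation

section MixingEnvelope

open ProbabilityTheory
open scoped Topology

variable {Ω : Type*} {mΩ : MeasurableSpace Ω} {P : Measure Ω} {X : ℕ → Ω → ℝ} {φ f : ℝ → ℝ}

/-- Identically distributed α-mixing random variables `X i`, with an envelope function `φ ≥ 1`
integrable under their common law. -/
structure IsMixingEnvelope (P : Measure Ω) (X : ℕ → Ω → ℝ) (φ : ℝ → ℝ) : Prop where
  measurable (i : ℕ) : Measurable (X i)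
  identDistrib (i : ℕ) : IdentDistrib (X i) (X 0) P P
  tendsto_alphaCoef : Tendsto (alphaCoef P X) atTop (𝓝 0)
  measurable_envelope : Measurable φ
  one_le (x : ℝ) : 1 ≤ φ x
  integrable : Integrable (fun ω => φ (X 0 ω)) P

/-- The upper quantile function of the envelope. -/
noncomputable def envelopeQuantile (P : Measure Ω) (X : ℕ → Ω → ℝ) (φ : ℝ → ℝ) : ℝ → ℝ :=
  tailQuantile P fun ω => φ (X 0 ω)

/-- The integrated mixing weight of the envelope at time `n`, which bounds the error terms of the
law of large numbers at time `n`. -/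
noncomputable def envelopeWeight (P : Measure Ω) (X : ℕ → Ω → ℝ) (φ : ℝ → ℝ) (n : ℕ) : ℝ :=
  ∫ u, mixingWeight (alphaCoef P X) (envelopeQuantile P X φ) n u ∂uniform01

/-- Rio's condition for the strong law: integrability over `(0,1)` of the envelope quantile function
against the logarithm of the inverse mixing coefficients. -/
def LogMixingCondition (P : Measure Ω) (X : ℕ → Ω → ℝ) (φ : ℝ → ℝ) : Prop :=
  IntegrableOn (fun s => Real.log (1 + rcInv (alphaExt (alphaCoef P X)) (s / 2)) *
    envelopeQuantile P X φ s) (Ioo 0 1)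

theorem envelopeQuantile_nonneg (u : ℝ) : 0 ≤ envelopeQuantile P X φ u := rcInv_nonneg _ u

theorem envelopeWeight_nonneg (n : ℕ) : 0 ≤ envelopeWeight P X φ n :=
  integral_nonneg fun u => mixingWeight_nonneg n.cast_nonneg (envelopeQuantile_nonneg u)

namespace IsMixingEnvelope

theorem measurable_comp (h : IsMixingEnvelope P X φ) (i : ℕ) : Measurable fun ω => φ (X i ω) :=
  h.measurable_envelope.comp (h.measurable i)

theorem integral_comp_eq (h : IsMixingEnvelope P X φ) {g : ℝ → ℝ} (hg : Measurable g) (i : ℕ) :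
    ∫ ω, g (X i ω) ∂P = ∫ ω, g (X 0 ω) ∂P :=
  ((h.identDistrib i).comp hg).integral_eq

theorem integrable_comp (h : IsMixingEnvelope P X φ) {g : ℝ → ℝ} (hg : Measurable g)
    (hgφ : ∀ x, |g x| ≤ φ x) (i : ℕ) : Integrable (fun ω => g (X i ω)) P :=
  ((h.identDistrib i).comp hg).integrable_iff.mpr <|
    h.integrable.mono' (hg.comp (h.measurable 0)).aestronglyMeasurable (.of_forall fun _ => hgφ _)

variable [IsProbabilityMeasure P]

theorem one_le_integral (h : IsMixingEnvelope P X φ) : 1 ≤ ∫ ω, φ (X 0 ω) ∂P := by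
  calc (1 : ℝ) = ∫ _, (1 : ℝ) ∂P := by simp
    _ ≤ ∫ ω, φ (X 0 ω) ∂P := integral_mono (integrable_const 1) h.integrable fun _ => h.one_le _

theorem identDistrib_envelopeQuantile (h : IsMixingEnvelope P X φ) (i : ℕ) :
    IdentDistrib (envelopeQuantile P X φ) (fun ω => φ (X i ω)) uniform01 P :=
  (identDistrib_tailQuantile (h.measurable_comp 0)
    fun _ => zero_le_one.trans (h.one_le _)).trans
    ((h.identDistrib i).symm.comp h.measurable_envelope)

theorem integrable_envelopeQuantile (h : IsMixingEnvelope P X φ) :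
    Integrable (envelopeQuantile P X φ) uniform01 :=
  (h.identDistrib_envelopeQuantile 0).integrable_iff.mpr h.integrable

theorem nat_mul_measureReal_lt_le (h : IsMixingEnvelope P X φ) {n : ℕ} (hn : 1 ≤ n) (i : ℕ) :
    n * P.real {ω | (n : ℝ) < φ (X i ω)} ≤ envelopeWeight P X φ n := by
  have hn0 : (0 : ℝ) < n := by exact_mod_cast hn
  have hg : Measurable ((Ioi (n : ℝ)).indicator fun _ => (n : ℝ)) :=
    measurable_const.indicator measurableSet_Ioi
  have hset : MeasurableSet {ω | (n : ℝ) < φ (X i ω)} :=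
    measurableSet_lt measurable_const (h.measurable_comp i)
  calc n * P.real {ω | (n : ℝ) < φ (X i ω)}
      = ∫ ω, (Ioi (n : ℝ)).indicator (fun _ => (n : ℝ)) (φ (X i ω)) ∂P := by
        rw [mul_comm, ← smul_eq_mul, ← integral_indicator_const _ hset]
        rfl
    _ = ∫ u, (Ioi (n : ℝ)).indicator (fun _ => (n : ℝ)) (envelopeQuantile P X φ u) ∂uniform01 :=
        (((h.identDistrib_envelopeQuantile i).comp hg).integral_eq).symm
    _ ≤ envelopeWeight P X φ n := by
        refine integral_mono_of_nonneg (.of_forall fun u => indicator_nonneg (fun _ _ => hn0.le) _)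
          (integrable_mixingWeight h.tendsto_alphaCoef h.integrable_envelopeQuantile
            envelopeQuantile_nonneg hn0.le) (.of_forall fun u => ?_)
        exact indicator_apply_le' (fun hu => (mixingWeight_of_le hn0 (le_of_lt hu)).ge)
          fun _ => mixingWeight_nonneg hn0.le (envelopeQuantile_nonneg u)

theorem integral_max_min_sub_le (h : IsMixingEnvelope P X φ) {n q : ℕ} {M : ℝ}
    (hM : IsBlockTruncation (alphaCoef P X) (envelopeQuantile P X φ) n q M) (i : ℕ) :
    ∫ ω, max (min (φ (X i ω)) n - M) 0 ∂P ≤ envelopeWeight P X φ n := by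
  have hg : Measurable fun t : ℝ => max (min t n - M) 0 := by fun_prop
  refine ((h.identDistrib_envelopeQuantile i).comp hg).integral_eq.symm.trans_le ?_
  exact hM.integral_max_min_sub_le h.tendsto_alphaCoef h.integrable_envelopeQuantile
    envelopeQuantile_nonneg

theorem abs_min_sub_integral_le (h : IsMixingEnvelope P X φ) (hf0 : ∀ x, 0 ≤ f x)
    (hfφ : ∀ x, f x ≤ φ x) {M : ℝ} (hM : 1 ≤ M) (x : ℝ) :
    |min (f x) M - ∫ ω, min (f (X 0 ω)) M ∂P| ≤ (∫ ω, φ (X 0 ω) ∂P) * min (φ x) M := by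
  have hM0 : 0 ≤ M := zero_le_one.trans hM
  have hφM : 1 ≤ min (φ x) M := le_min (h.one_le x) hM
  have hmean0 : 0 ≤ ∫ ω, min (f (X 0 ω)) M ∂P := integral_nonneg fun _ => le_min (hf0 _) hM0
  have hmean : ∫ ω, min (f (X 0 ω)) M ∂P ≤ ∫ ω, φ (X 0 ω) ∂P :=
    integral_mono_of_nonneg (.of_forall fun _ => le_min (hf0 _) hM0) h.integrable
      (.of_forall fun _ => (min_le_left _ _).trans (hfφ _))
  refine abs_sub_le_of_nonneg_of_le (le_min (hf0 x) hM0) ?_ hmean0 ?_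
  · exact (min_le_min_right M (hfφ x)).trans
      (le_mul_of_one_le_left (zero_le_one.trans hφM) h.one_le_integral)
  · exact hmean.trans (le_mul_of_one_le_right (hmean0.trans hmean) hφM)

theorem isDominatedMixing (h : IsMixingEnvelope P X φ) (hf : Measurable f)
    (hf0 : ∀ x, 0 ≤ f x) (hfφ : ∀ x, f x ≤ φ x) {n : ℕ} (hn : 1 ≤ n) {M : ℝ} (hM : 1 ≤ M) :
    IsDominatedMixing P (fun i ω => (min (f (X i ω)) M - ∫ ω, min (f (X 0 ω)) M ∂P) / n)
      (fun i ω => (∫ ω, φ (X 0 ω) ∂P) / n * min (φ (X i ω)) M) (alphaCoef P X)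
      (fun u => (∫ ω, φ (X 0 ω) ∂P) / n * min (envelopeQuantile P X φ u) M)
      ((∫ ω, φ (X 0 ω) ∂P) / n * M) := by
  have hn0 : (0 : ℝ) < n := by exact_mod_cast hn
  have hM0 : 0 < M := zero_lt_one.trans_le hM
  have hκ : 0 < (∫ ω, φ (X 0 ω) ∂P) / n := div_pos (zero_lt_one.trans_le h.one_le_integral) hn0
  have hfM : Measurable fun x => min (f x) M := hf.min measurable_const
  have hg : Measurable fun x => (min (f x) M - ∫ ω, min (f (X 0 ω)) M ∂P) / n :=
    (hfM.sub_const _).div_const _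
  have hscale : Measurable fun t : ℝ => (∫ ω, φ (X 0 ω) ∂P) / n * min t M := by fun_prop
  have hfφM : ∀ x, |min (f x) M| ≤ φ x := fun x => by
    rw [abs_of_nonneg (le_min (hf0 x) hM0.le)]
    exact (min_le_left _ _).trans (hfφ x)
  refine
    { measurable := fun i => hg.comp (h.measurable i)
      integral_eq_zero := fun i => ?_
      strongMixingBound := fun k l => (strongMixingBound_alphaCoef h.measurable k l).mono
        (coordSigma_comp_le hg _) (coordSigma_comp_le hg _)
      coeff_nonneg := alphaCoef_nonneg P X
      coeff_lt_one := fun l => (alphaCoef_le h.measurable l).trans_lt (by norm_num)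
      abs_le := fun i ω => ?_
      le_bound := fun i ω => mul_le_mul_of_nonneg_left (min_le_right _ _) hκ.le
      bound_pos := mul_pos hκ hM0
      identDistrib := fun i => (h.identDistrib_envelopeQuantile i).comp hscale
      antitoneOn := fun u hu v hv huv => ?_
      pos := fun u hu => mul_pos hκ (lt_min (zero_lt_one.trans_le ?_) hM0) }
  · rw [integral_div, integral_sub (h.integrable_comp hfM hfφM i) (integrable_const _),
      h.integral_comp_eq hfM i]
    simp
  · rw [abs_div, abs_of_pos hn0, div_mul_eq_mul_div]
    gcongr
    exact h.abs_min_sub_integral_le hf0 hfφ hM _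
  · exact mul_le_mul_of_nonneg_left (min_le_min_right M
      (antitoneOn_tailQuantile (h.measurable_comp 0) hu hv huv)) hκ.le
  · exact one_le_tailQuantile (h.measurable_comp 0) (fun _ => h.one_le _) hu

theorem integral_huber_partialSum_le (h : IsMixingEnvelope P X φ) (hf : Measurable f)
    (hf0 : ∀ x, 0 ≤ f x) (hfφ : ∀ x, f x ≤ φ x) {n q : ℕ} {M : ℝ}
    (hM : IsBlockTruncation (alphaCoef P X) (envelopeQuantile P X φ) n q M) :
    ∫ ω, huber (partialSum
        (fun i ω => (min (f (X i ω)) M - ∫ ω, min (f (X 0 ω)) M ∂P) / n) n ω) ∂P ≤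
      (8 * (∫ ω, φ (X 0 ω) ∂P) + 18 * (∫ ω, φ (X 0 ω) ∂P) ^ 2) * envelopeWeight P X φ n := by
  have hn := hM.cast_pos
  have hα1 : ∀ l, alphaCoef P X l ≤ 1 := fun l =>
    (alphaCoef_le h.measurable l).trans (by norm_num)
  have hcoeff := hM.level_mul_coeff_le h.tendsto_alphaCoef (alphaCoef_nonneg P X q) (hα1 q)
    h.integrable_envelopeQuantile envelopeQuantile_nonneg
  have hsq := hM.integral_sq_add_sum_le h.tendsto_alphaCoef hα1 h.integrable_envelopeQuantile
    envelopeQuantile_nonneg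
  have hhuber := (h.isDominatedMixing hf hf0 hfφ (Nat.cast_pos.mp hn)
    hM.one_le_level).integral_huber_partialSum_le n hM.one_le_length
  set κ := ∫ ω, φ (X 0 ω) ∂P with hκ_def
  have hκ : 0 ≤ κ := zero_le_one.trans h.one_le_integral
  simp only [mul_pow, integral_const_mul] at hhuber
  rw [← Finset.mul_sum, ← mul_add] at hhuber
  refine hhuber.trans ?_
  rw [← envelopeWeight] at hcoeff hsq
  calc _ ≤ n * (4 * (κ / n) * (2 * envelopeWeight P X φ n)
        + 9 * ((κ / n) ^ 2 * (n * (2 * envelopeWeight P X φ n)))) := by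
        rw [← mul_assoc 4, mul_assoc (4 * (κ / n))]
        gcongr
    _ = (8 * κ + 18 * κ ^ 2) * envelopeWeight P X φ n := by field_simp; ring

end IsMixingEnvelope

end MixingEnvelope

section GeometricSums

variable {a h : ℕ → ℝ} {b c t x y : ℝ}

theorem sum_range_le_sub (hah : ∀ j, a j ≤ h (j + 1) - h j) (J : ℕ) :
    ∑ j ∈ Finset.range J, a j ≤ h J - h 0 :=
  (Finset.sum_le_sum fun j _ => hah j).trans_eq (Finset.sum_range_sub h J)

theorem sum_pow_of_pow_le (hc : 1 < c) (hx : 0 ≤ x) (J : ℕ) :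
    ∑ j ∈ Finset.range J, (if c ^ j ≤ x then c ^ j else 0) ≤ c / (c - 1) * x := by
  have hc1 : 0 < c - 1 := sub_pos.mpr hc
  have htele := sum_range_le_sub (a := fun j => if c ^ j ≤ x then c ^ j else 0)
    (h := fun j => min (c ^ j) (c * x) / (c - 1)) (fun j => ?_) J
  · have hupper : min (c ^ J) (c * x) / (c - 1) ≤ c / (c - 1) * x := by
      rw [div_mul_eq_mul_div]
      gcongr
      exact min_le_right _ _
    exact htele.trans ((sub_le_self _ (by positivity)).trans hupper)
  · have hcj : 0 < c ^ j := by positivity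
    rw [← sub_div, le_div_iff₀ hc1, pow_succ]
    split_ifs with hjx
    · rw [min_eq_left (by nlinarith), min_eq_left (by nlinarith)]
      linarith
    · rw [zero_mul, sub_nonneg]
      exact min_le_min_right _ (by nlinarith)

theorem sum_inv_pow_of_lt_pow (hc : 1 < c) (hy : 0 < y) (J : ℕ) :
    ∑ j ∈ Finset.range J, (if y < c ^ j then (c ^ j)⁻¹ else 0) ≤ c / (c - 1) * y⁻¹ := by
  have hc1 : 0 < c - 1 := sub_pos.mpr hc
  have htele := sum_range_le_sub (a := fun j => if y < c ^ j then (c ^ j)⁻¹ else 0)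
    (h := fun j => -(c / (c - 1) * min y⁻¹ (c ^ j)⁻¹)) (fun j => ?_) J
  · have hupper : c / (c - 1) * min y⁻¹ (c ^ 0)⁻¹ ≤ c / (c - 1) * y⁻¹ := by
      gcongr
      exact min_le_left _ _
    have hlower : 0 ≤ c / (c - 1) * min y⁻¹ (c ^ J)⁻¹ := by positivity
    linarith
  · have hanti : (c ^ (j + 1))⁻¹ ≤ (c ^ j)⁻¹ :=
      inv_anti₀ (by positivity) (pow_le_pow_right₀ hc.le j.le_succ)
    split_ifs with hjy
    · have hjy' : (c ^ j)⁻¹ ≤ y⁻¹ := inv_anti₀ hy hjy.le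
      rw [min_eq_right hjy', min_eq_right (hanti.trans hjy')]
      refine le_of_eq ?_
      rw [pow_succ]
      field_simp
      ring
    · rw [neg_sub_neg, ← mul_sub]
      exact mul_nonneg (by positivity) (sub_nonneg.mpr (min_le_min_left _ hanti))

theorem sum_log_of_lt_pow_le (hc : 1 < c) (hx : 0 < x) (hxy : x ≤ y) (J : ℕ) :
    ∑ j ∈ Finset.range J, (if x < c ^ j ∧ c ^ j ≤ y then Real.log c else 0) ≤
      Real.log y + Real.log c - Real.log x := by
  have hlc : 0 < Real.log c := Real.log_pos hc
  have hlxy : Real.log x ≤ Real.log y := Real.log_le_log hx hxy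
  have htele := sum_range_le_sub (a := fun j => if x < c ^ j ∧ c ^ j ≤ y then Real.log c else 0)
    (h := fun j => max (Real.log x) (min (j * Real.log c) (Real.log y + Real.log c)))
    (fun j => ?_) J
  · refine htele.trans (sub_le_sub (max_le (by linarith) (min_le_right _ _)) (le_max_left _ _))
  · push_cast
    split_ifs with hj
    · have hxj : Real.log x < j * Real.log c := by
        rw [← Real.log_pow]
        exact Real.log_lt_log hx hj.1
      have hjy : j * Real.log c ≤ Real.log y := by
        rw [← Real.log_pow]
        exact Real.log_le_log (hx.trans hj.1) hj.2
      rw [min_eq_left (by linarith), min_eq_left (by linarith), max_eq_right (by linarith),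
        max_eq_right (by linarith)]
      linarith
    · rw [sub_nonneg]
      gcongr
      linarith

theorem lagWeight_floor_le {p : ℝ} (hp : 1 ≤ p) (hb : 1 ≤ b) (ht : 1 ≤ t) :
    lagWeight ⌊p⌋₊ b t ≤ (if p ≤ t then p else 0) + (if t < p ∧ p ≤ 2 * b * t then t else 0) +
      (if 2 * b * t < p then 2 * b * t ^ 2 * p⁻¹ else 0) := by
  have hn1 : (1 : ℝ) ≤ ⌊p⌋₊ := by exact_mod_cast Nat.le_floor (by simpa using hp)
  have hnp : (⌊p⌋₊ : ℝ) ≤ p := Nat.floor_le (zero_le_one.trans hp)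
  have hpn : p ≤ 2 * ⌊p⌋₊ := by linarith [Nat.lt_floor_add_one p]
  have hn0 : (0 : ℝ) < ⌊p⌋₊ := zero_lt_one.trans_le hn1
  have ht0 : 0 < t := zero_lt_one.trans_le ht
  have hbt : t ≤ 2 * b * t := le_mul_of_one_le_left ht0.le (by linarith)
  rcases le_or_gt p t with hpt | htp
  · rw [if_pos hpt, if_neg (fun h => hpt.not_gt h.1), if_neg (hpt.trans hbt).not_gt, add_zero,
      add_zero, lagWeight_of_le_mul hn0 (hnp.trans (hpt.trans (le_mul_of_one_le_left ht0.le hb)))]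
    exact (min_le_right _ _).trans hnp
  rcases le_or_gt p (2 * b * t) with hpbt | hbtp
  · rw [if_neg htp.not_ge, if_pos ⟨htp, hpbt⟩, if_neg hpbt.not_gt, zero_add, add_zero]
    exact lagWeight_le hn0.le ht0.le
  · rw [if_neg htp.not_ge, if_neg (fun h => hbtp.not_ge h.2), if_pos hbtp, zero_add, zero_add,
      lagWeight_of_mul_le hn0 hb ht0.le (by linarith), ← div_eq_mul_inv,
      div_le_div_iff₀ hn0 (hn0.trans_le hnp)]
    nlinarith [mul_le_mul_of_nonneg_left hpn (by positivity : 0 ≤ b * t ^ 2)]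

theorem sum_lagWeight_floor_pow_le (hc : 1 < c) (hb : 1 ≤ b) (ht : 1 ≤ t) (J : ℕ) :
    ∑ j ∈ Finset.range J, lagWeight ⌊c ^ j⌋₊ b t ≤
      (2 * (c / (c - 1)) + 1 + 1 / Real.log c) * (t * (1 + Real.log b)) := by
  have hlc : 0 < Real.log c := Real.log_pos hc
  have hlb : 0 ≤ Real.log b := Real.log_nonneg hb
  have hc1 : 0 < c - 1 := sub_pos.mpr hc
  have ht0 : 0 < t := zero_lt_one.trans_le ht
  have hb0 : 0 < b := zero_lt_one.trans_le hb
  have hlow := sum_pow_of_pow_le hc ht0.le J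
  have hmid := sum_log_of_lt_pow_le hc ht0
    (le_mul_of_one_le_left ht0.le (by linarith) : t ≤ 2 * b * t) J
  have hhigh := sum_inv_pow_of_lt_pow hc (by positivity : 0 < 2 * b * t) J
  have hlog : Real.log (2 * b * t) ≤ 1 + Real.log b + Real.log t := by
    rw [Real.log_mul (by positivity) ht0.ne', Real.log_mul two_ne_zero hb0.ne']
    linarith [Real.log_two_lt_d9]
  calc ∑ j ∈ Finset.range J, lagWeight ⌊c ^ j⌋₊ b t
      ≤ ∑ j ∈ Finset.range J, ((if c ^ j ≤ t then c ^ j else 0) +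
          t / Real.log c * (if t < c ^ j ∧ c ^ j ≤ 2 * b * t then Real.log c else 0) +
          2 * b * t ^ 2 * (if 2 * b * t < c ^ j then (c ^ j)⁻¹ else 0)) := by
        refine Finset.sum_le_sum fun j _ => ?_
        simp only [mul_ite, mul_zero, div_mul_cancel₀ _ hlc.ne']
        exact lagWeight_floor_le (one_le_pow₀ hc.le) hb ht
    _ ≤ c / (c - 1) * t + t / Real.log c * (1 + Real.log b + Real.log c) +
          2 * b * t ^ 2 * (c / (c - 1) * (2 * b * t)⁻¹) := by
        rw [Finset.sum_add_distrib, Finset.sum_add_distrib, ← Finset.mul_sum, ← Finset.mul_sum]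
        gcongr
        linarith
    _ = t * (2 * (c / (c - 1)) + 1 + 1 / Real.log c * (1 + Real.log b)) := by
        field_simp
        ring
    _ ≤ (2 * (c / (c - 1)) + 1 + 1 / Real.log c) * (t * (1 + Real.log b)) := by
        have hslack : 0 ≤ t * ((2 * (c / (c - 1)) + 1) * Real.log b) := by positivity
        linear_combination hslack

end GeometricSums

section Excess

variable {n : ℕ} {M y : ℝ}

/-- The excess of `y` over the level `M`, capped at `n`. -/
noncomputable def excess (n : ℕ) (M y : ℝ) : ℝ := min (max (y - M) 0) n

theorem excess_nonneg (n : ℕ) (M y : ℝ) : 0 ≤ excess n M y :=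
  le_min (le_max_right _ _) n.cast_nonneg

theorem excess_le_cap (n : ℕ) (M y : ℝ) : excess n M y ≤ n := min_le_right _ _

theorem measurable_excess (n : ℕ) (M : ℝ) : Measurable (excess n M) := by
  unfold excess
  fun_prop

theorem excess_le (n : ℕ) (M y : ℝ) :
    excess n M y ≤ max (min y n - M) 0 + (Ioi (n : ℝ)).indicator (fun _ => (n : ℝ)) y := by
  rcases le_or_gt y n with hy | hy
  · rw [indicator_of_notMem (notMem_Ioi.mpr hy), add_zero, min_eq_left hy]
    exact min_le_left _ _
  · rw [indicator_of_mem (mem_Ioi.mpr hy)]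
    exact (min_le_right _ _).trans (le_add_of_nonneg_left (le_max_right _ _))

theorem max_sub_le_excess_add (hM : 0 ≤ M) (y : ℝ) :
    max (y - M) 0 ≤ excess n M y + max (y - n) 0 := by
  rcases le_total (max (y - M) 0) n with h | h
  · rw [excess, min_eq_left h]
    exact le_add_of_nonneg_right (le_max_right _ _)
  · rw [excess, min_eq_right h]
    exact max_le (by linarith [le_max_left (y - n) 0])
      (add_nonneg n.cast_nonneg (le_max_right _ _))

theorem sub_min_le_max_sub {x : ℝ} (hxy : x ≤ y) (M : ℝ) : x - min x M ≤ max (y - M) 0 := by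
  rw [← max_sub_sub_left, sub_self, max_comm]
  exact max_le_max_right 0 (sub_le_sub_right hxy M)

theorem sum_sub_min_div_le_sum_excess_div {x y : ℕ → ℝ} (hxy : ∀ i, x i ≤ y i)
    (h1 : (∑ i ∈ Finset.range n, excess n M (y i)) / n < 1) :
    (∑ i ∈ Finset.range n, (x i - min (x i) M)) / n ≤
      (∑ i ∈ Finset.range n, excess n M (y i)) / n := by
  refine div_le_div_of_nonneg_right (Finset.sum_le_sum fun i hi => ?_) n.cast_nonneg
  have hn : (0 : ℝ) < n := by exact_mod_cast (Nat.zero_le i).trans_lt (Finset.mem_range.mp hi)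
  have hlt : excess n M (y i) < n :=
    (Finset.single_le_sum (fun i _ => excess_nonneg n M (y i)) hi).trans_lt ((div_lt_one hn).mp h1)
  have huncapped : excess n M (y i) = max (y i - M) 0 :=
    min_eq_left ((min_lt_iff.mp hlt).resolve_right (lt_irrefl _)).le
  exact huncapped ▸ sub_min_le_max_sub (hxy i) M

theorem sum_div_eq_sum_centred_div_add (x : ℕ → ℝ) (M m : ℝ) (hn : 1 ≤ n) :
    (∑ i ∈ Finset.range n, x i) / n = ∑ i ∈ Finset.range n, (min (x i) M - m) / n +
      (∑ i ∈ Finset.range n, (x i - min (x i) M)) / n + m := by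
  have hn0 : (n : ℝ) ≠ 0 := by exact_mod_cast Nat.one_le_iff_ne_zero.mp hn
  rw [← Finset.sum_div]
  simp only [Finset.sum_sub_distrib, Finset.sum_const, Finset.card_range, nsmul_eq_mul]
  field_simp
  ring

end Excess

section StrongLaw

open ProbabilityTheory
open scoped Topology

variable {Ω : Type*} {mΩ : MeasurableSpace Ω} {P : Measure Ω} {X : ℕ → Ω → ℝ} {φ f : ℝ → ℝ}

theorem ae_tendsto_zero_of_summable_integral {V : ℕ → Ω → ℝ} {e : ℕ → ℝ}
    (hV : ∀ j, Integrable (V j) P) (hV0 : ∀ j ω, 0 ≤ V j ω) (he : Summable e)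
    (hle : ∀ j, ∫ ω, V j ω ∂P ≤ e j) : ∀ᵐ ω ∂P, Tendsto (fun j => V j ω) atTop (𝓝 0) := by
  have hsum : Summable fun j => ∫ ω, V j ω ∂P :=
    he.of_nonneg_of_le (fun j => integral_nonneg (hV0 j)) hle
  have hmeas : ∀ j, AEMeasurable (fun ω => ENNReal.ofReal (V j ω)) P := fun j =>
    (hV j).aemeasurable.ennreal_ofReal
  have hfinite : ∫⁻ ω, ∑' j, ENNReal.ofReal (V j ω) ∂P ≠ ⊤ := by
    rw [lintegral_tsum hmeas]
    simp only [← fun j => ofReal_integral_eq_lintegral_ofReal (hV j) (.of_forall (hV0 j))]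
    rw [← ENNReal.ofReal_tsum_of_nonneg (fun j => integral_nonneg (hV0 j)) hsum]
    exact ENNReal.ofReal_ne_top
  filter_upwards [ae_lt_top' (AEMeasurable.tsum hmeas) hfinite] with ω hω
  have htoReal := (ENNReal.tendsto_toReal ENNReal.zero_ne_top).comp
    (ENNReal.tendsto_atTop_zero_of_tsum_ne_top hω.ne)
  simpa [Function.comp_def, ENNReal.toReal_ofReal (hV0 _ ω)] using htoReal

namespace IsMixingEnvelope

theorem tendsto_integral_max_sub (h : IsMixingEnvelope P X φ) {N : ℕ → ℕ}
    (hN : Tendsto N atTop atTop) :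
    Tendsto (fun j => ∫ ω, max (φ (X 0 ω) - N j) 0 ∂P) atTop (𝓝 0) := by
  have hlim : ∀ ω, Tendsto (fun j => max (φ (X 0 ω) - N j) 0) atTop (𝓝 0) := fun ω => by
    refine tendsto_const_nhds.congr' ?_
    filter_upwards [(tendsto_natCast_atTop_atTop.comp hN).eventually_ge_atTop (φ (X 0 ω))]
      with j hj
    exact (max_eq_right (sub_nonpos.mpr hj)).symm
  simpa only [integral_zero] using tendsto_integral_of_dominated_convergence (fun ω => φ (X 0 ω))
    (fun j => (((h.measurable_comp 0).sub_const (N j : ℝ)).max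
      measurable_const).aestronglyMeasurable) h.integrable
    (fun j => .of_forall fun ω => (Real.norm_of_nonneg (le_max_right _ _)).trans_le <|
      max_le (sub_le_self _ (N j).cast_nonneg) (zero_le_one.trans (h.one_le _)))
    (.of_forall hlim)

variable [IsProbabilityMeasure P]

theorem integrable_mul_one_add_log (h : IsMixingEnvelope P X φ) (hlog : LogMixingCondition P X φ) :
    Integrable (fun u => envelopeQuantile P X φ u *
      (1 + Real.log (1 + rcInv (alphaExt (alphaCoef P X)) u))) uniform01 := by
  have hanti : AntitoneOn (rcInv (alphaExt (alphaCoef P X))) (Ioi 0) :=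
    antitoneOn_rcInv (tendsto_alphaExt h.tendsto_alphaCoef)
  have hinv : AEMeasurable (rcInv (alphaExt (alphaCoef P X))) uniform01 :=
    aemeasurable_restrict_of_antitoneOn measurableSet_Ioo (hanti.mono fun _ hu => hu.1)
  have hQ := h.integrable_envelopeQuantile
  refine (hQ.add hlog).mono' (hQ.aemeasurable.mul ((Real.measurable_log.comp_aemeasurable
    (hinv.const_add 1)).const_add 1)).aestronglyMeasurable ?_
  filter_upwards [ae_restrict_mem measurableSet_Ioo] with u hu
  have hpos : 0 < 1 + rcInv (alphaExt (alphaCoef P X)) u :=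
    add_pos_of_pos_of_nonneg one_pos (rcInv_nonneg _ _)
  have hlog0 : 0 ≤ Real.log (1 + rcInv (alphaExt (alphaCoef P X)) u) :=
    Real.log_nonneg (le_add_of_nonneg_right (rcInv_nonneg _ _))
  have hhalf : rcInv (alphaExt (alphaCoef P X)) u ≤ rcInv (alphaExt (alphaCoef P X)) (u / 2) :=
    hanti (half_pos hu.1) hu.1 (half_le_self hu.1.le)
  rw [Real.norm_of_nonneg (mul_nonneg (envelopeQuantile_nonneg u) (by linarith)), mul_one_add,
    mul_comm _ (Real.log _)]
  exact add_le_add_right (mul_le_mul_of_nonneg_right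
    (Real.log_le_log hpos (add_le_add_right hhalf 1)) (envelopeQuantile_nonneg u)) _

theorem summable_envelopeWeight_floor_pow (h : IsMixingEnvelope P X φ)
    (hlog : LogMixingCondition P X φ) {c : ℝ} (hc : 1 < c) :
    Summable fun j : ℕ => envelopeWeight P X φ ⌊c ^ j⌋₊ := by
  have hint : ∀ n : ℕ, Integrable
      (mixingWeight (alphaCoef P X) (envelopeQuantile P X φ) n) uniform01 := fun n =>
    integrable_mixingWeight h.tendsto_alphaCoef h.integrable_envelopeQuantile
      envelopeQuantile_nonneg n.cast_nonneg
  refine summable_of_sum_range_le (c := ∫ u, (2 * (c / (c - 1)) + 1 + 1 / Real.log c) *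
    (envelopeQuantile P X φ u * (1 + Real.log (1 + rcInv (alphaExt (alphaCoef P X)) u))) ∂uniform01)
    (fun j => envelopeWeight_nonneg _) fun J => ?_
  simp only [envelopeWeight]
  rw [← integral_finsetSum _ fun j _ => hint _]
  refine integral_mono_ae (integrable_finsetSum _ fun j _ => hint _)
    ((h.integrable_mul_one_add_log hlog).const_mul _) ?_
  filter_upwards [ae_restrict_mem measurableSet_Ioo] with u hu
  exact sum_lagWeight_floor_pow_le hc (le_add_of_nonneg_right (rcInv_nonneg _ _))
    (one_le_tailQuantile (h.measurable_comp 0) (fun _ => h.one_le _) hu) J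

theorem integrable_excess (h : IsMixingEnvelope P X φ) (n : ℕ) (M : ℝ) (i : ℕ) :
    Integrable (fun ω => excess n M (φ (X i ω))) P :=
  .of_bound ((measurable_excess n M).comp (h.measurable_comp i)).aestronglyMeasurable n
    (.of_forall fun _ => (Real.norm_of_nonneg (excess_nonneg _ _ _)).trans_le (excess_le_cap _ _ _))

theorem integral_excess_le (h : IsMixingEnvelope P X φ) {n q : ℕ} {M : ℝ}
    (hM : IsBlockTruncation (alphaCoef P X) (envelopeQuantile P X φ) n q M) (i : ℕ) :
    ∫ ω, excess n M (φ (X i ω)) ∂P ≤ 2 * envelopeWeight P X φ n := by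
  have hn : 1 ≤ n := Nat.cast_pos.mp hM.cast_pos
  have hM0 : 0 ≤ M := zero_le_one.trans hM.one_le_level
  have hmax : Integrable (fun ω => max (min (φ (X i ω)) n - M) 0) P :=
    h.integrable_comp (g := fun x => max (min (φ x) n - M) 0)
      (((h.measurable_envelope.min measurable_const).sub_const M).max measurable_const)
      (fun x => by
        rw [abs_of_nonneg (le_max_right _ _)]
        exact max_le ((sub_le_self _ hM0).trans (min_le_left _ _)) (zero_le_one.trans (h.one_le x)))
      i
  have hset : MeasurableSet {ω | (n : ℝ) < φ (X i ω)} :=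
    measurableSet_lt measurable_const (h.measurable_comp i)
  have hind : Integrable ({ω | (n : ℝ) < φ (X i ω)}.indicator fun _ => (n : ℝ)) P :=
    (integrable_const _).indicator hset
  calc ∫ ω, excess n M (φ (X i ω)) ∂P
      ≤ ∫ ω, (max (min (φ (X i ω)) n - M) 0 +
          {ω | (n : ℝ) < φ (X i ω)}.indicator (fun _ => (n : ℝ)) ω) ∂P :=
        integral_mono (h.integrable_excess n M i) (hmax.add hind) fun _ => excess_le _ _ _
    _ = ∫ ω, max (min (φ (X i ω)) n - M) 0 ∂P + n * P.real {ω | (n : ℝ) < φ (X i ω)} := by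
        rw [integral_add hmax hind, integral_indicator_const _ hset, smul_eq_mul, mul_comm]
    _ ≤ 2 * envelopeWeight P X φ n := by
        rw [two_mul]
        exact add_le_add (h.integral_max_min_sub_le hM i) (h.nat_mul_measureReal_lt_le hn i)

section Subsequence

variable {N q : ℕ → ℕ} {M : ℕ → ℝ}

theorem ae_tendsto_partialSum_truncated (h : IsMixingEnvelope P X φ) (hf : Measurable f)
    (hf0 : ∀ x, 0 ≤ f x) (hfφ : ∀ x, f x ≤ φ x)
    (hM : ∀ j, IsBlockTruncation (alphaCoef P X) (envelopeQuantile P X φ) (N j) (q j) (M j))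
    (hsum : Summable fun j => envelopeWeight P X φ (N j)) :
    ∀ᵐ ω ∂P, Tendsto (fun j => partialSum
      (fun i ω => (min (f (X i ω)) (M j) - ∫ ω, min (f (X 0 ω)) (M j) ∂P) / N j) (N j) ω)
      atTop (𝓝 0) := by
  have hdom := fun j => h.isDominatedMixing hf hf0 hfφ (Nat.cast_pos.mp (hM j).cast_pos)
    (hM j).one_le_level
  filter_upwards [ae_tendsto_zero_of_summable_integral
    (fun j => (hdom j).integrable_huber_partialSum (N j)) (fun _ _ => huber_nonneg _)
    (hsum.mul_left _) fun j => h.integral_huber_partialSum_le hf hf0 hfφ (hM j)] with ω hω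
  exact tendsto_zero_of_tendsto_huber hω

theorem ae_tendsto_sum_excess_div (h : IsMixingEnvelope P X φ)
    (hM : ∀ j, IsBlockTruncation (alphaCoef P X) (envelopeQuantile P X φ) (N j) (q j) (M j))
    (hsum : Summable fun j => envelopeWeight P X φ (N j)) :
    ∀ᵐ ω ∂P, Tendsto
      (fun j => (∑ i ∈ Finset.range (N j), excess (N j) (M j) (φ (X i ω))) / N j) atTop (𝓝 0) := by
  refine ae_tendsto_zero_of_summable_integral
    (fun j => (integrable_finsetSum _ fun i _ => h.integrable_excess _ _ i).div_const _)
    (fun j ω => div_nonneg (Finset.sum_nonneg fun i _ => excess_nonneg _ _ _) (N j).cast_nonneg)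
    (hsum.mul_left 2) fun j => ?_
  rw [integral_div, integral_finsetSum _ fun i _ => h.integrable_excess _ _ i,
    div_le_iff₀' (hM j).cast_pos]
  refine (Finset.sum_le_card_nsmul _ _ _ fun i _ => h.integral_excess_le (hM j) i).trans_eq ?_
  rw [Finset.card_range, nsmul_eq_mul]

theorem tendsto_integral_min (h : IsMixingEnvelope P X φ) (hf : Measurable f)
    (hf0 : ∀ x, 0 ≤ f x) (hfφ : ∀ x, f x ≤ φ x) (hN : Tendsto N atTop atTop)
    (hM : ∀ j, IsBlockTruncation (alphaCoef P X) (envelopeQuantile P X φ) (N j) (q j) (M j))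
    (hsum : Summable fun j => envelopeWeight P X φ (N j)) :
    Tendsto (fun j => ∫ ω, min (f (X 0 ω)) (M j) ∂P) atTop (𝓝 (∫ ω, f (X 0 ω) ∂P)) := by
  have hM0 : ∀ j, 0 ≤ M j := fun j => zero_le_one.trans (hM j).one_le_level
  have hfint : Integrable (fun ω => f (X 0 ω)) P :=
    h.integrable_comp hf (fun x => (abs_of_nonneg (hf0 x)).trans_le (hfφ x)) 0
  have hmin : ∀ j, Integrable (fun ω => min (f (X 0 ω)) (M j)) P := fun j =>
    hfint.inf (integrable_const (M j))
  have hmax : ∀ j, Integrable (fun ω => max (φ (X 0 ω) - N j) 0) P := fun j =>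
    (h.integrable.sub (integrable_const _)).sup (integrable_const 0)
  have hdefect : ∀ j, ∫ ω, f (X 0 ω) ∂P - ∫ ω, min (f (X 0 ω)) (M j) ∂P ≤
      2 * envelopeWeight P X φ (N j) + ∫ ω, max (φ (X 0 ω) - N j) 0 ∂P := fun j => by
    rw [← integral_sub hfint (hmin j)]
    refine (integral_mono (hfint.sub (hmin j)) ((h.integrable_excess _ (M j) 0).add (hmax j))
      fun ω => (sub_min_le_max_sub (hfφ _) _).trans (max_sub_le_excess_add (hM0 j) _)).trans ?_
    rw [integral_add' (h.integrable_excess _ _ 0) (hmax j)]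
    exact add_le_add_left (h.integral_excess_le (hM j) 0) _
  have hlim := squeeze_zero (fun j => sub_nonneg.mpr
    (integral_mono (hmin j) hfint fun ω => min_le_left _ _)) hdefect
    (by simpa using (hsum.tendsto_atTop_zero.const_mul 2).add (h.tendsto_integral_max_sub hN))
  simpa using hlim.const_sub (∫ ω, f (X 0 ω) ∂P)

theorem ae_tendsto_sum_div_subseq (h : IsMixingEnvelope P X φ) (hf : Measurable f)
    (hf0 : ∀ x, 0 ≤ f x) (hfφ : ∀ x, f x ≤ φ x) (hN1 : ∀ j, 1 ≤ N j)
    (hN : Tendsto N atTop atTop) (hsum : Summable fun j => envelopeWeight P X φ (N j)) :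
    ∀ᵐ ω ∂P, Tendsto (fun j => (∑ i ∈ Finset.range (N j), f (X i ω)) / N j) atTop
      (𝓝 (∫ ω, f (X 0 ω) ∂P)) := by
  choose q M hM using fun j => exists_isBlockTruncation (P := P) (h.measurable_comp 0)
    (fun _ => h.one_le _) h.tendsto_alphaCoef
    (fun l => (alphaCoef_le h.measurable l).trans (by norm_num)) (hN1 j)
  filter_upwards [h.ae_tendsto_partialSum_truncated hf hf0 hfφ hM hsum,
    h.ae_tendsto_sum_excess_div hM hsum] with ω hcentred hexcess
  have hdefect : Tendsto (fun j => (∑ i ∈ Finset.range (N j),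
      (f (X i ω) - min (f (X i ω)) (M j))) / N j) atTop (𝓝 0) := by
    refine squeeze_zero' (.of_forall fun j => div_nonneg (Finset.sum_nonneg fun i _ =>
      sub_nonneg.mpr (min_le_left _ _)) (N j).cast_nonneg) ?_ hexcess
    filter_upwards [hexcess.eventually_lt_const one_pos] with j hj
    exact sum_sub_min_div_le_sum_excess_div (fun i => hfφ _) hj
  have hlim := (hcentred.add hdefect).add (h.tendsto_integral_min hf hf0 hfφ hN hM hsum)
  rw [add_zero, zero_add] at hlim
  exact hlim.congr fun j => (sum_div_eq_sum_centred_div_add _ _ _ (hN1 j)).symm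

end Subsequence

theorem ae_tendsto_sum_div (h : IsMixingEnvelope P X φ) (hlog : LogMixingCondition P X φ)
    (hf : Measurable f) (hf0 : ∀ x, 0 ≤ f x) (hfφ : ∀ x, f x ≤ φ x) :
    ∀ᵐ ω ∂P, Tendsto (fun n : ℕ => (∑ i ∈ Finset.range n, f (X i ω)) / n) atTop
      (𝓝 (∫ ω, f (X 0 ω) ∂P)) := by
  have hratio : ∀ k : ℕ, (1 : ℝ) < 1 + 1 / ((k : ℝ) + 1) := fun k =>
    lt_add_of_pos_right 1 Nat.one_div_pos_of_nat
  have hsub := fun k : ℕ => h.ae_tendsto_sum_div_subseq hf hf0 hfφ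
    (fun j => Nat.le_floor (by simpa using one_le_pow₀ (hratio k).le))
    (tendsto_nat_floor_atTop.comp (tendsto_pow_atTop_atTop_of_one_lt (hratio k)))
    (h.summable_envelopeWeight_floor_pow hlog (hratio k))
  filter_upwards [ae_all_iff.mpr hsub] with ω hω
  refine tendsto_div_of_monotone_of_tendsto_div_floor_pow
    (fun n => ∑ i ∈ Finset.range n, f (X i ω)) _ ?_ (fun k : ℕ => 1 + 1 / ((k : ℝ) + 1)) hratio
    ?_ hω
  · exact monotone_nat_of_le_succ fun n => by
      rw [Finset.sum_range_succ]
      exact le_add_of_nonneg_right (hf0 _)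
  · simpa using (tendsto_one_div_add_atTop_nhds_zero_nat (𝕜 := ℝ)).const_add 1

end IsMixingEnvelope

end StrongLaw

section AdmissibleKernel

open scoped Topology

variable {G : ℝ → ℝ} {C β x y : ℝ}

/-- Condition (a) for a monotone function `G` with values in `[0,1]`: `G` is Lipschitz at every
point `x` of `(0,1)`, with constant at most `C x^{-β} (1-x)^{-β}`. -/
structure IsAdmissibleKernel (C β : ℝ) (G : ℝ → ℝ) : Prop where
  monotone : Monotone G
  mem_Icc (x : ℝ) : G x ∈ Icc (0 : ℝ) 1
  abs_sub_le (x : ℝ) (hx : x ∈ Ioo (0 : ℝ) 1) : ∃ δ > 0, ∀ y ∈ Ioo (0 : ℝ) 1,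
    |y - x| ≤ δ → |G y - G x| ≤ C * x ^ (-β) * (1 - x) ^ (-β) * |y - x|

/-- The reflection `t ↦ 1 - G (1 - t)`, which exchanges the lower and upper tails of `G`. -/
def reflectedKernel (G : ℝ → ℝ) (t : ℝ) : ℝ := 1 - G (1 - t)

theorem reflectedKernel_one_sub (G : ℝ → ℝ) (t : ℝ) : reflectedKernel G (1 - t) = 1 - G t := by
  rw [reflectedKernel, sub_sub_cancel]

theorem one_sub_mem_Ioo (hx : x ∈ Ioo (0 : ℝ) 1) : 1 - x ∈ Ioo (0 : ℝ) 1 :=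
  ⟨sub_pos.mpr hx.2, sub_lt_self 1 hx.1⟩

theorem one_sub_mem_Icc (hx : x ∈ Icc (0 : ℝ) 1) : 1 - x ∈ Icc (0 : ℝ) 1 :=
  ⟨sub_nonneg.mpr hx.2, sub_le_self 1 hx.1⟩

theorem one_sub_rpow_neg_le_two (hx : x ≤ 1 / 2) (hβ0 : 0 ≤ β) (hβ1 : β ≤ 1) :
    (1 - x) ^ (-β) ≤ 2 :=
  calc (1 - x) ^ (-β) ≤ (2⁻¹ : ℝ) ^ (-β) :=
        Real.rpow_le_rpow_of_nonpos (by norm_num) (by linarith) (neg_nonpos.mpr hβ0)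
    _ = 2 ^ β := by rw [Real.rpow_neg (by norm_num), Real.inv_rpow (by norm_num), inv_inv]
    _ ≤ 2 ^ (1 : ℝ) := Real.rpow_le_rpow_of_exponent_le one_le_two hβ1
    _ = 2 := Real.rpow_one 2

theorem exists_mem_lt_of_integrableOn {α : Type*} {mα : MeasurableSpace α} {μ : Measure α}
    {g : α → ℝ} {s : Set α} (hs : MeasurableSet s) (hg : IntegrableOn g s μ) (hμs : μ s = ⊤)
    {ε : ℝ} (hε : 0 < ε) : ∃ x ∈ s, g x < ε := by
  by_contra! hge
  have hconst : IntegrableOn (fun _ => ε) s μ :=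
    hg.mono' aestronglyMeasurable_const (ae_restrict_of_forall_mem hs fun x hx =>
      (Real.norm_of_nonneg hε.le).trans_le (hge x hx))
  rw [integrableOn_const_iff] at hconst
  simp [hε.ne', hμs] at hconst

namespace IsAdmissibleKernel

theorem reflected (h : IsAdmissibleKernel C β G) :
    IsAdmissibleKernel C β (reflectedKernel G) where
  monotone _ _ hxy := sub_le_sub_left (h.monotone (sub_le_sub_left hxy 1)) 1
  mem_Icc x := one_sub_mem_Icc (h.mem_Icc _)
  abs_sub_le x hx := by
    obtain ⟨δ, hδ, hlip⟩ := h.abs_sub_le (1 - x) (one_sub_mem_Ioo hx)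
    refine ⟨δ, hδ, fun y hy hyx => ?_⟩
    have hflip := hlip (1 - y) (one_sub_mem_Ioo hy)
    rw [sub_sub_sub_cancel_left, abs_sub_comm x y, sub_sub_cancel] at hflip
    unfold reflectedKernel
    rw [sub_sub_sub_cancel_left, abs_sub_comm, mul_right_comm C]
    exact hflip hyx

theorem continuousAt (h : IsAdmissibleKernel C β G) (hx : x ∈ Ioo (0 : ℝ) 1) :
    ContinuousAt G x := by
  obtain ⟨δ, hδ, hlip⟩ := h.abs_sub_le x hx
  rw [ContinuousAt, tendsto_iff_dist_tendsto_zero]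
  have hbound : Tendsto (fun y => C * x ^ (-β) * (1 - x) ^ (-β) * |y - x|) (𝓝 x) (𝓝 0) := by
    have hcont : Continuous fun y => C * x ^ (-β) * (1 - x) ^ (-β) * |y - x| := by fun_prop
    simpa using hcont.tendsto x
  refine squeeze_zero' (.of_forall fun _ => dist_nonneg) ?_ hbound
  filter_upwards [isOpen_Ioo.mem_nhds hx, Metric.closedBall_mem_nhds x hδ] with y hy hyδ
  exact hlip y hy hyδ

theorem eventually_slope_lt (h : IsAdmissibleKernel C β G) (hx : x ∈ Ioo (0 : ℝ) 1) {r : ℝ}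
    (hr : C * x ^ (-β) * (1 - x) ^ (-β) < r) : ∀ᶠ z in 𝓝[>] x, slope G x z < r := by
  obtain ⟨δ, hδ, hlip⟩ := h.abs_sub_le x hx
  filter_upwards [mem_nhdsWithin_of_mem_nhds (isOpen_Ioo.mem_nhds hx),
    mem_nhdsWithin_of_mem_nhds (Metric.closedBall_mem_nhds x hδ), self_mem_nhdsWithin]
    with z hz hzδ hxz
  have hpos : 0 < z - x := sub_pos.mpr hxz
  rw [slope_def_field, div_lt_iff₀ hpos]
  calc G z - G x ≤ |G z - G x| := le_abs_self _
    _ ≤ C * x ^ (-β) * (1 - x) ^ (-β) * |z - x| := hlip z hz hzδ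
    _ < r * (z - x) := by
      rw [abs_of_pos hpos]
      exact mul_lt_mul_of_pos_right hr hpos

theorem le_add_mul_rpow (h : IsAdmissibleKernel C β G) (hC : 0 ≤ C) (hβ0 : 0 ≤ β) (hβ1 : β < 1)
    (hx : 0 < x) (hxy : x ≤ y) (hy : y ≤ 1 / 2) :
    G y ≤ G x + 2 * C / (1 - β) * y ^ (1 - β) := by
  have hb : 0 < 1 - β := sub_pos.mpr hβ1
  have hIoo : ∀ z ∈ Icc x y, z ∈ Ioo (0 : ℝ) 1 := fun z hz =>
    ⟨hx.trans_le hz.1, by linarith [hz.2]⟩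
  have hderiv : ∀ z ∈ Icc x y, HasDerivAt (fun z => G x + 2 * C / (1 - β) * z ^ (1 - β))
      (2 * C * z ^ (-β)) z := fun z hz => by
    have hpow := ((Real.hasDerivAt_rpow_const (p := 1 - β)
      (Or.inl (hIoo z hz).1.ne')).const_mul (2 * C / (1 - β))).const_add (G x)
    rwa [sub_sub_cancel_left, ← mul_assoc, div_mul_cancel₀ _ hb.ne'] at hpow
  refine image_le_of_liminf_slope_right_le_deriv_boundary
    (fun z hz => (h.continuousAt (hIoo z hz)).continuousWithinAt) ?_
    (fun z hz => (hderiv z hz).continuousAt.continuousWithinAt)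
    (fun z hz => (hderiv z (Ico_subset_Icc_self hz)).hasDerivWithinAt) (fun z hz r hr => ?_)
    (right_mem_Icc.mpr hxy)
  · exact le_add_of_nonneg_right
      (mul_nonneg (div_nonneg (by positivity) hb.le) (Real.rpow_nonneg hx.le _))
  · have hz' := hIoo z (Ico_subset_Icc_self hz)
    refine (h.eventually_slope_lt hz' (lt_of_le_of_lt ?_ hr)).frequently
    rw [mul_comm 2 C, mul_right_comm C 2]
    exact mul_le_mul_of_nonneg_left (one_sub_rpow_neg_le_two (hz.2.le.trans hy) hβ0 hβ1.le)
      (mul_nonneg hC (Real.rpow_nonneg hz'.1.le _))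

theorem exists_le_mul_rpow (h : IsAdmissibleKernel C β G) (hC : 0 ≤ C) (hβ0 : 0 ≤ β)
    (hβ1 : β < 1) (hinf : ∀ ε > 0, ∃ x ∈ Ioo (0 : ℝ) 1, G x < ε) :
    ∃ D, 0 ≤ D ∧ ∀ y ∈ Icc (0 : ℝ) 1, G y ≤ D * y ^ (1 - β) := by
  have hE : 0 ≤ 2 * C / (1 - β) := div_nonneg (by positivity) (sub_nonneg.mpr hβ1.le)
  refine ⟨2 * C / (1 - β) + 2, by positivity, fun y hy => ?_⟩
  have hy0 : 0 ≤ y ^ (1 - β) := Real.rpow_nonneg hy.1 _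
  rcases le_or_gt y (1 / 2) with hhalf | hhalf
  · refine le_of_forall_pos_lt_add fun ε hε => ?_
    obtain ⟨x, hx, hxε⟩ := hinf ε hε
    rcases le_total x y with hxy | hyx
    · linarith [h.le_add_mul_rpow hC hβ0 hβ1 hx.1 hxy hhalf]
    · linarith [h.monotone hyx, mul_nonneg hE hy0]
  · have hle : y ≤ y ^ (1 - β) := by
      simpa using Real.rpow_le_rpow_of_exponent_ge (by linarith) hy.2 (sub_le_self 1 hβ0)
    linarith [(h.mem_Icc y).2, mul_nonneg hE hy0]

end IsAdmissibleKernel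

end AdmissibleKernel

section LFunctional

open scoped Topology

variable {C β γ B : ℝ} {G K F : ℝ → ℝ}

theorem rpow_mul_rpow_le {p : ℝ} (hp : p ∈ Ioo (0 : ℝ) 1) (hB : 0 ≤ B) (hβ : 0 ≤ β)
    (hγ : γ ≤ 1) : (p ^ γ * B) ^ (1 - β) ≤ B ^ (1 - β) * p ^ (γ - β) := by
  rw [Real.mul_rpow (Real.rpow_nonneg hp.1.le _) hB, ← Real.rpow_mul hp.1.le, mul_comm]
  refine mul_le_mul_of_nonneg_left ?_ (Real.rpow_nonneg hB _)
  exact Real.rpow_le_rpow_of_exponent_ge hp.1 hp.2.le (by nlinarith)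

theorem IsAdmissibleKernel.tendsto_setIntegral (h : IsAdmissibleKernel C β G) (hC : 0 ≤ C)
    (hβ0 : 0 ≤ β) (hβ1 : β < 1) (hγ : γ ≤ 1) (hB : 0 ≤ B) {α : Type*} {mα : MeasurableSpace α}
    {μ : Measure α} {s : Set α} (hs : MeasurableSet s) (hμs : μ s = ⊤) {p : α → ℝ}
    (hp : ∀ x, p x ∈ Ioo (0 : ℝ) 1) (hGp : IntegrableOn (fun x => G (p x)) s μ)
    (hpow : IntegrableOn (fun x => p x ^ (γ - β)) s μ) {e : ℕ → α → ℝ}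
    (he : ∀ n, Measurable (e n)) (he01 : ∀ n x, e n x ∈ Icc (0 : ℝ) 1)
    (hle : ∀ᶠ n in atTop, ∀ x ∈ s, e n x ≤ p x ^ γ * B)
    (hlim : ∀ᵐ x ∂μ, Tendsto (fun n => e n x) atTop (𝓝 (p x))) :
    Tendsto (fun n => ∫ x in s, G (e n x) ∂μ) atTop (𝓝 (∫ x in s, G (p x) ∂μ)) := by
  obtain ⟨D, hD, hGD⟩ := h.exists_le_mul_rpow hC hβ0 hβ1 fun ε hε =>
    have ⟨x, _, hx⟩ := exists_mem_lt_of_integrableOn hs hGp hμs hε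
    ⟨p x, hp x, hx⟩
  refine tendsto_integral_filter_of_dominated_convergence
    (fun x => D * (B ^ (1 - β) * p x ^ (γ - β)))
    (.of_forall fun n => (h.monotone.measurable.comp (he n)).aestronglyMeasurable) ?_
    ((hpow.const_mul _).const_mul _)
    (ae_restrict_of_ae (hlim.mono fun x hx => (h.continuousAt (hp x)).tendsto.comp hx))
  filter_upwards [hle] with n hn
  refine ae_restrict_of_forall_mem hs fun x hx => ?_
  calc ‖G (e n x)‖ = G (e n x) := Real.norm_of_nonneg (h.mem_Icc _).1
    _ ≤ D * e n x ^ (1 - β) := hGD _ (he01 n x)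
    _ ≤ D * (p x ^ γ * B) ^ (1 - β) := mul_le_mul_of_nonneg_left
        (Real.rpow_le_rpow (he01 n x).1 (hn x hx) (sub_nonneg.mpr hβ1.le)) hD
    _ ≤ D * (B ^ (1 - β) * p x ^ (γ - β)) :=
        mul_le_mul_of_nonneg_left (rpow_mul_rpow_le (hp x) hB hβ0 hγ) hD

theorem IsAdmissibleKernel.tendsto_LFunc (h : IsAdmissibleKernel C β K) (hC : 0 ≤ C)
    (hβ0 : 0 ≤ β) (hβ1 : β < 1) (hγ : γ ≤ 1) (hB : 0 ≤ B) (hF : ∀ x, F x ∈ Ioo (0 : ℝ) 1)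
    (hKF : MemFK K F) (hlower : IntegrableOn (fun x => F x ^ (γ - β)) (Iic 0))
    (hupper : IntegrableOn (fun x => (1 - F x) ^ (γ - β)) (Ioi 0)) {Fn : ℕ → ℝ → ℝ}
    (hmono : ∀ n, Monotone (Fn n)) (hFn : ∀ n x, Fn n x ∈ Icc (0 : ℝ) 1)
    (hFn_lower : ∀ᶠ n in atTop, ∀ x < 0, Fn n x ≤ F x ^ γ * B)
    (hFn_upper : ∀ᶠ n in atTop, ∀ x > 0, 1 - Fn n x ≤ (1 - F x) ^ γ * B)
    (hlim : ∀ᵐ x, Tendsto (fun n => Fn n x) atTop (𝓝 (F x))) :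
    Tendsto (fun n => LFunc K (Fn n)) atTop (𝓝 (LFunc K F)) := by
  have hmeas n : Measurable (Fn n) := (hmono n).measurable
  have hKF_upper : IntegrableOn (fun x => reflectedKernel K (1 - F x)) (Ioi 0) := by
    simpa only [reflectedKernel_one_sub] using hKF.2
  have hneg := h.tendsto_setIntegral hC hβ0 hβ1 hγ hB measurableSet_Iio Real.volume_Iio hF
    (hKF.1.mono_set Iio_subset_Iic_self) (hlower.mono_set Iio_subset_Iic_self) hmeas hFn
    hFn_lower hlim
  have hpos := h.reflected.tendsto_setIntegral hC hβ0 hβ1 hγ hB measurableSet_Ioi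
    Real.volume_Ioi (fun x => one_sub_mem_Ioo (hF x)) hKF_upper hupper
    (fun n => (hmeas n).const_sub 1) (fun n x => one_sub_mem_Icc (hFn n x)) hFn_upper
    (hlim.mono fun x hx => hx.const_sub 1)
  simp only [reflectedKernel_one_sub] at hpos
  simpa only [LFunc, integral_Iic_eq_integral_Iio] using hpos.sub hneg

end LFunctional

section EmpiricalDistribution

open scoped Topology

variable {Ω : Type*} {X : ℕ → Ω → ℝ} {F : ℝ → ℝ} {γ B x : ℝ} {n : ℕ} {ω : Ω}

theorem empDF_eq_sum_indicator (X : ℕ → Ω → ℝ) (n : ℕ) (ω : Ω) (x : ℝ) :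
    empDF X n ω x = (∑ i ∈ Finset.range n, (Iic x).indicator (fun _ => 1) (X i ω)) / n := by
  simp only [empDF, indicator_apply, mem_Iic, Finset.sum_boole]

theorem one_sub_empDF_eq_sum_indicator (X : ℕ → Ω → ℝ) (hn : n ≠ 0) (ω : Ω) (x : ℝ) :
    1 - empDF X n ω x = (∑ i ∈ Finset.range n, (Ioi x).indicator (fun _ => 1) (X i ω)) / n := by
  have hcompl (t : ℝ) : (Ioi x).indicator (fun _ => (1 : ℝ)) t
      = 1 - (Iic x).indicator (fun _ => 1) t := by
    rw [← compl_Iic, indicator_compl, Pi.sub_apply]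
  simp only [hcompl, Finset.sum_sub_distrib, Finset.sum_const, Finset.card_range, nsmul_eq_mul,
    mul_one, sub_div, empDF_eq_sum_indicator]
  rw [div_self (Nat.cast_ne_zero.mpr hn)]

theorem monotone_empDF (X : ℕ → Ω → ℝ) (n : ℕ) (ω : Ω) : Monotone (empDF X n ω) := by
  intro x y hxy
  simp only [empDF_eq_sum_indicator]
  gcongr

theorem empDF_mem_Icc (X : ℕ → Ω → ℝ) (n : ℕ) (ω : Ω) (x : ℝ) : empDF X n ω x ∈ Icc (0 : ℝ) 1 := by
  refine ⟨by unfold empDF; positivity, div_le_one_of_le₀ ?_ n.cast_nonneg⟩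
  exact_mod_cast (Finset.card_filter_le _ _).trans_eq (Finset.card_range n)

theorem one_le_phiW (hγ : 0 ≤ γ) (hF : ∀ x, F x ∈ Ioo (0 : ℝ) 1) (x : ℝ) : 1 ≤ phiW γ F x := by
  have hone {p : ℝ} (hp : p ∈ Ioo (0 : ℝ) 1) : 1 ≤ p ^ (-γ) :=
    Real.one_le_rpow_of_pos_of_le_one_of_nonpos hp.1 hp.2.le (neg_nonpos.mpr hγ)
  unfold phiW
  split_ifs
  exacts [hone (hF x), hone (one_sub_mem_Ioo (hF x))]

theorem measurable_phiW (hF : Monotone F) (γ : ℝ) : Measurable (phiW γ F) :=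
  .ite measurableSet_Iio (hF.measurable.pow_const _) ((hF.measurable.const_sub 1).pow_const _)

theorem one_le_rpow_mul_rpow_neg {p q : ℝ} (hq : 0 < q) (hqp : q ≤ p) (hγ : 0 ≤ γ) :
    1 ≤ p ^ γ * q ^ (-γ) := by
  rw [Real.rpow_neg hq.le, ← div_eq_mul_inv, one_le_div (Real.rpow_pos_of_pos hq γ)]
  exact Real.rpow_le_rpow hq.le hqp hγ

theorem indicator_Iic_le_rpow_mul_phiW (hmono : Monotone F) (hF : ∀ x, F x ∈ Ioo (0 : ℝ) 1)
    (hγ : 0 ≤ γ) (hx : x < 0) (t : ℝ) :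
    (Iic x).indicator (fun _ => 1) t ≤ F x ^ γ * phiW γ F t := by
  refine indicator_apply_le' (fun ht => ?_) fun _ =>
    mul_nonneg (Real.rpow_nonneg (hF x).1.le _) (zero_le_one.trans (one_le_phiW hγ hF t))
  rw [phiW, if_pos (lt_of_le_of_lt ht hx)]
  exact one_le_rpow_mul_rpow_neg (hF t).1 (hmono ht) hγ

theorem indicator_Ioi_le_rpow_mul_phiW (hmono : Monotone F) (hF : ∀ x, F x ∈ Ioo (0 : ℝ) 1)
    (hγ : 0 ≤ γ) (hx : 0 ≤ x) (t : ℝ) :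
    (Ioi x).indicator (fun _ => 1) t ≤ (1 - F x) ^ γ * phiW γ F t := by
  refine indicator_apply_le' (fun ht => ?_) fun _ => mul_nonneg
    (Real.rpow_nonneg (one_sub_mem_Ioo (hF x)).1.le _) (zero_le_one.trans (one_le_phiW hγ hF t))
  rw [phiW, if_neg (hx.trans_lt ht).le.not_gt]
  exact one_le_rpow_mul_rpow_neg (one_sub_mem_Ioo (hF t)).1
    (sub_le_sub_left (hmono (le_of_lt ht)) 1) hγ

theorem sum_div_le_mul_of_le_mul {f g : ℝ → ℝ} {c : ℝ} (hc : 0 ≤ c) (hfg : ∀ t, f t ≤ c * g t)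
    (hB : (∑ i ∈ Finset.range n, g (X i ω)) / n ≤ B) :
    (∑ i ∈ Finset.range n, f (X i ω)) / n ≤ c * B :=
  calc (∑ i ∈ Finset.range n, f (X i ω)) / n
      ≤ (∑ i ∈ Finset.range n, c * g (X i ω)) / n := by gcongr; exact hfg _
    _ = c * ((∑ i ∈ Finset.range n, g (X i ω)) / n) := by rw [← Finset.mul_sum, mul_div_assoc]
    _ ≤ c * B := mul_le_mul_of_nonneg_left hB hc

theorem empDF_le_rpow_mul (hmono : Monotone F) (hF : ∀ x, F x ∈ Ioo (0 : ℝ) 1) (hγ : 0 ≤ γ)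
    (hB : (∑ i ∈ Finset.range n, phiW γ F (X i ω)) / n ≤ B) (hx : x < 0) :
    empDF X n ω x ≤ F x ^ γ * B := by
  rw [empDF_eq_sum_indicator]
  exact sum_div_le_mul_of_le_mul (Real.rpow_nonneg (hF x).1.le _)
    (indicator_Iic_le_rpow_mul_phiW hmono hF hγ hx) hB

theorem one_sub_empDF_le_rpow_mul (hmono : Monotone F) (hF : ∀ x, F x ∈ Ioo (0 : ℝ) 1)
    (hγ : 0 ≤ γ) (hn : n ≠ 0) (hB : (∑ i ∈ Finset.range n, phiW γ F (X i ω)) / n ≤ B)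
    (hx : 0 ≤ x) : 1 - empDF X n ω x ≤ (1 - F x) ^ γ * B := by
  rw [one_sub_empDF_eq_sum_indicator X hn]
  exact sum_div_le_mul_of_le_mul (Real.rpow_nonneg (one_sub_mem_Ioo (hF x)).1.le _)
    (indicator_Ioi_le_rpow_mul_phiW hmono hF hγ hx) hB

theorem tendsto_of_monotone_of_tendsto_dense {ι α β : Type*} [LinearOrder α] [TopologicalSpace α]
    [OrderTopology α] [DenselyOrdered α] [NoMinOrder α] [NoMaxOrder α] [LinearOrder β]
    [TopologicalSpace β] [OrderTopology β] {l : Filter ι} {g : ι → α → β} {f : α → β} {s : Set α}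
    {a : α} (hs : Dense s) (hg : ∀ i, Monotone (g i))
    (hlim : ∀ r ∈ s, Tendsto (fun i => g i r) l (𝓝 (f r))) (ha : ContinuousAt f a) :
    Tendsto (fun i => g i a) l (𝓝 (f a)) := by
  refine tendsto_order.mpr ⟨fun b hb => ?_, fun b hb => ?_⟩
  · obtain ⟨c, hca, hc⟩ := exists_Ioc_subset_of_mem_nhds (ha.eventually_const_lt hb) (exists_lt a)
    obtain ⟨r, hrs, hcr, hra⟩ := hs.exists_between hca
    filter_upwards [(hlim r hrs).eventually_const_lt (hc ⟨hcr, hra.le⟩)] with i hi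
    exact hi.trans_le (hg i hra.le)
  · obtain ⟨c, hac, hc⟩ := exists_Ico_subset_of_mem_nhds (ha.eventually_lt_const hb) (exists_gt a)
    obtain ⟨r, hrs, har, hrc⟩ := hs.exists_between hac
    filter_upwards [(hlim r hrs).eventually_lt_const (hc ⟨har.le, hrc⟩)] with i hi
    exact (hg i har.le).trans_lt hi

end EmpiricalDistribution

section GlivenkoCantelli

open ProbabilityTheory
open scoped Topology

variable {Ω : Type*} {mΩ : MeasurableSpace Ω} {P : Measure Ω} [IsProbabilityMeasure P]
  {X : ℕ → Ω → ℝ} {φ : ℝ → ℝ}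

theorem monotone_distFun (P : Measure Ω) [IsFiniteMeasure P] (W : Ω → ℝ) :
    Monotone (distFun P W) :=
  fun _ _ hxy => measureReal_mono fun _ hω => le_trans hω hxy

namespace IsMixingEnvelope

theorem ae_exists_sum_div_le (h : IsMixingEnvelope P X φ) (hlog : LogMixingCondition P X φ) :
    ∀ᵐ ω ∂P, ∃ B, 0 ≤ B ∧ ∀ n : ℕ, (∑ i ∈ Finset.range n, φ (X i ω)) / n ≤ B := by
  filter_upwards [h.ae_tendsto_sum_div hlog h.measurable_envelope
    (fun x => zero_le_one.trans (h.one_le x)) fun _ => le_rfl] with ω hω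
  obtain ⟨B, hB⟩ := hω.bddAbove_range
  exact ⟨B, by simpa using hB ⟨0, rfl⟩, fun n => hB ⟨n, rfl⟩⟩

theorem ae_tendsto_empDF_apply (h : IsMixingEnvelope P X φ)
    (hlog : LogMixingCondition P X φ) (x : ℝ) :
    ∀ᵐ ω ∂P, Tendsto (fun n => empDF X n ω x) atTop (𝓝 (distFun P (X 0) x)) := by
  have hmean : ∫ ω, (Iic x).indicator (fun _ => (1 : ℝ)) (X 0 ω) ∂P = distFun P (X 0) x :=
    integral_indicator_one (h.measurable 0 measurableSet_Iic)
  simp only [empDF_eq_sum_indicator, ← hmean]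
  exact h.ae_tendsto_sum_div hlog (measurable_const.indicator measurableSet_Iic)
    (indicator_nonneg fun _ _ => zero_le_one)
    fun t => indicator_apply_le' (fun _ => h.one_le t) fun _ => zero_le_one.trans (h.one_le t)

theorem ae_ae_tendsto_empDF (h : IsMixingEnvelope P X φ) (hlog : LogMixingCondition P X φ) :
    ∀ᵐ ω ∂P, ∀ᵐ x, Tendsto (fun n => empDF X n ω x) atTop (𝓝 (distFun P (X 0) x)) := by
  filter_upwards [ae_all_iff.mpr fun r : ℚ => h.ae_tendsto_empDF_apply hlog r] with ω hω
  filter_upwards [(monotone_distFun P (X 0)).countable_not_continuousAt.ae_notMem volume] with x hx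
  exact tendsto_of_monotone_of_tendsto_dense Rat.denseRange_cast (monotone_empDF X · ω)
    (forall_mem_range.mpr hω) (not_not.mp hx)

end IsMixingEnvelope

end GlivenkoCantelli

section Conclusion

theorem IsDFon01.isAdmissibleKernel {K L : ℝ → ℝ} {C β : ℝ} (hK : IsDFon01 K)
    (hlip : ∀ x ∈ Ioo (0 : ℝ) 1, ∃ δ > 0, ∀ y ∈ Ioo (0 : ℝ) 1,
      |y - x| ≤ δ → |K y - K x| ≤ L x * |y - x|)
    (hL : ∀ x ∈ Ioo (0 : ℝ) 1, L x ≤ C * x ^ (-β) * (1 - x) ^ (-β)) :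
    IsAdmissibleKernel C β K := by
  obtain ⟨μ, hμ, -, hKμ⟩ := hK
  obtain rfl : K = fun x => μ.real (Iic x) := funext hKμ
  refine ⟨fun x y hxy => measureReal_mono (Iic_subset_Iic.mpr hxy),
    fun x => ⟨measureReal_nonneg, measureReal_le_one⟩, fun x hx => ?_⟩
  obtain ⟨δ, hδ, h⟩ := hlip x hx
  exact ⟨δ, hδ, fun y hy hyx =>
    (h y hy hyx).trans (mul_le_mul_of_nonneg_right (hL x hx) (abs_nonneg _))⟩

end Conclusion

/-- **Ordinary SLLN for L-statistics of α-mixing data**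
(Theorem 3 (ii) of the paper). -/
theorem slln_l_statistic_alpha_mixing
    {Ω : Type*} [MeasurableSpace Ω] (P : Measure Ω) [IsProbabilityMeasure P]
    (X : ℕ → Ω → ℝ) (hmeas : ∀ i, Measurable (X i))
    (hident : ∀ i, Measure.map (X i) P = Measure.map (X 0) P)
    (hmix : Tendsto (alphaCoef P X) atTop (nhds 0))
    (K : ℝ → ℝ) (hK : IsDFon01 K)
    (F : ℝ → ℝ) (hFdist : ∀ x, F x = distFun P (X 0) x)
    (hF01 : ∀ x, F x ∈ Set.Ioo (0 : ℝ) 1) (hFK : MemFK K F)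
    (β' γ : ℝ) (hβ'0 : 0 ≤ β') (hβ'γ : β' < γ) (hγ1 : γ ≤ 1)
    (C' : ℝ) (hC' : 0 < C') (L : ℝ → ℝ)
    (hLpos : ∀ x ∈ Set.Ioo (0 : ℝ) 1, 0 < L x)
    (ha : ∀ x ∈ Set.Ioo (0 : ℝ) 1, ∃ δ > 0, ∀ y ∈ Set.Ioo (0 : ℝ) 1,
      |y - x| ≤ δ → |K y - K x| ≤ L x * |y - x|)
    (hL : ∀ x ∈ Set.Ioo (0 : ℝ) 1, L x ≤ C' * x ^ (-β') * (1 - x) ^ (-β'))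
    (hb : IntegrableOn (fun x => F x ^ (γ - β')) (Set.Iic (0 : ℝ)) ∧
      IntegrableOn (fun x => (1 - F x) ^ (γ - β')) (Set.Ioi (0 : ℝ)))
    (hint : Integrable (fun ω => phiW γ F (X 0 ω)) P)
    (hcond : IntegrableOn
      (fun s => Real.log (1 + rcInv (alphaExt (alphaCoef P X)) (s / 2)) *
        rcInv (fun x => 1 - distFun P (fun ω => phiW γ F (X 0 ω)) x) s)
      (Set.Ioo (0 : ℝ) 1)) :
    ∀ᵐ ω ∂P, Tendsto
      (fun n : ℕ => |LFunc K (empDF X n ω) - LFunc K F|)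
      atTop (nhds 0) := by
  obtain rfl : F = distFun P (X 0) := funext hFdist
  have hγ0 : 0 ≤ γ := hβ'0.trans hβ'γ.le
  have hF : Monotone (distFun P (X 0)) := monotone_distFun P (X 0)
  have hKadm : IsAdmissibleKernel C' β' K := hK.isAdmissibleKernel ha hL
  have henv : IsMixingEnvelope P X (phiW γ (distFun P (X 0))) :=
    { measurable := hmeas
      identDistrib := fun i => ⟨(hmeas i).aemeasurable, (hmeas 0).aemeasurable, hident i⟩
      tendsto_alphaCoef := hmix
      measurable_envelope := measurable_phiW hF γ
      one_le := one_le_phiW hγ0 hF01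
      integrable := hint }
  filter_upwards [henv.ae_exists_sum_div_le hcond, henv.ae_ae_tendsto_empDF hcond]
    with ω ⟨B, hB0, hB⟩ hlim
  have hLFunc : Tendsto (fun n => LFunc K (empDF X n ω)) atTop (nhds (LFunc K (distFun P (X 0)))) :=
    hKadm.tendsto_LFunc hC'.le hβ'0 (hβ'γ.trans_le hγ1) hγ1 hB0 hF01 hFK hb.1 hb.2
      (monotone_empDF X · ω) (empDF_mem_Icc X · ω)
      (.of_forall fun n _ hx => empDF_le_rpow_mul hF hF01 hγ0 (hB n) hx)
      ((eventually_ne_atTop 0).mono fun n hn _ hx =>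
        one_sub_empDF_le_rpow_mul hF hF01 hγ0 hn (hB n) (le_of_lt hx)) hlim
  simpa using (hLFunc.sub_const (LFunc K (distFun P (X 0)))).abs
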